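/- Let d ∈ ℕ and let (X_i)_{i∈ℕ} be a strictly stationary sequence of S_d-valued random vectors satisfying assumptions (A2) (for some p ∈ (2,∞), sup_{i≠j} ‖h_{i,j}‖_p < ∞ where h_{i,j} = f_{X_i,X_j} − f_{X_i} f_{X_j} and the L^p norm is over S_d × S_d) and (A3) (α(m) ≪ m^{−ν} for some ν > 2(p−1)/(p−2)). Let q ∈ (1,2) satisfy 1/p + 1/q = 1, let s ∈ Int(S_d), and let b = b(n) → 0. With the choice β_n = min{⌈b^{−d/(νq)}⌉, n−1}, the total off-diagonal covariance sum satisfies Σ_{1 ≤ i ≠ j ≤ n} Cov(κ_{s,b}(X_i), κ_{s,b}(X_j)) = O_s(n b^{−d(1/p + 1/(νq))}) = o_s(n b^{−d/2}) as n → ∞. -/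

import Mathlib

open MeasureTheory Filter Asymptotics Real Topology

noncomputable section

/-- The `d`-dimensional simplex `S_d = {s ∈ [0,1]^d : ‖s‖₁ ≤ 1}`. -/
def Sd (d : ℕ) : Set (Fin d → ℝ) :=
  {s | (∀ i, s i ∈ Set.Icc (0 : ℝ) 1) ∧ ∑ i, |s i| ≤ 1}

/-- The interior of the simplex, `Int(S_d) = {s ∈ (0,1)^d : ‖s‖₁ < 1}`. -/
def SdInt (d : ℕ) : Set (Fin d → ℝ) :=
  {s | (∀ i, s i ∈ Set.Ioo (0 : ℝ) 1) ∧ ∑ i, |s i| < 1}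

/-- The Dirichlet(u, v) density on the simplex, evaluated at `x`. -/
def dirK (d : ℕ) (u : Fin d → ℝ) (v : ℝ) (x : Fin d → ℝ) : ℝ :=
  (Real.Gamma (∑ i, u i + v) / (Real.Gamma v * ∏ i, Real.Gamma (u i))) *
    (1 - ∑ i, x i) ^ (v - 1) * ∏ i, (x i) ^ (u i - 1)

/-- The Dirichlet kernel `κ_{s,b} = K_{s/b+1, (1-‖s‖₁)/b+1}`. -/
def kappa (d : ℕ) (s : Fin d → ℝ) (b : ℝ) (x : Fin d → ℝ) : ℝ :=
  dirK d (fun i => s i / b + 1) ((1 - ∑ i, s i) / b + 1) x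

/-- `ψ(s) = (4π)^{-d/2} / ((1-‖s‖₁)^{1/2} ∏ s_i^{1/2})`. -/
def psiFun (d : ℕ) (s : Fin d → ℝ) : ℝ :=
  (4 * π) ^ (-(d : ℝ) / 2) /
    ((1 - ∑ i, s i) ^ ((1 : ℝ) / 2) * ∏ i, (s i) ^ ((1 : ℝ) / 2))

/-- The Dirichlet kernel density estimator `f̂_{n,b}(s)`. -/
def fhat {Ω : Type*} (d n : ℕ) (b : ℝ) (X : ℕ → Ω → (Fin d → ℝ))
    (s : Fin d → ℝ) (ω : Ω) : ℝ :=
  (n : ℝ)⁻¹ * ∑ i ∈ Finset.Icc 1 n, kappa d s b (X i ω)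

/-- The strong mixing (α-mixing) coefficient of the sequence `X`. -/
def alphaMix {Ω : Type*} [MeasurableSpace Ω] (P : Measure Ω)
    {d : ℕ} (X : ℕ → Ω → (Fin d → ℝ)) (m : ℕ) : ℝ :=
  sSup {r : ℝ | ∃ k : ℕ, 1 ≤ k ∧ ∃ A B : Set Ω,
    MeasurableSet[⨆ i ∈ Set.Icc 1 k, MeasurableSpace.comap (X i) inferInstance] A ∧
    MeasurableSet[⨆ i ∈ Set.Ici (k + m), MeasurableSpace.comap (X i) inferInstance] B ∧
    r = |(P (A ∩ B)).toReal - (P A).toReal * (P B).toReal|}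

/-- Strict stationarity of the sequence `X` (indexed from 1). -/
def IsStrictlyStationary {Ω : Type*} [MeasurableSpace Ω] (P : Measure Ω)
    {d : ℕ} (X : ℕ → Ω → (Fin d → ℝ)) : Prop :=
  ∀ k n : ℕ,
    Measure.map (fun ω => fun t : Fin n => X (t.1 + 1 + k) ω) P =
      Measure.map (fun ω => fun t : Fin n => X (t.1 + 1) ω) P

/-- Covariance of two real random variables. -/
def cov {Ω : Type*} [MeasurableSpace Ω] (P : Measure Ω) (Y Z : Ω → ℝ) : ℝ :=
  ∫ ω, Y ω * Z ω ∂P - (∫ ω, Y ω ∂P) * (∫ ω, Z ω ∂P)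

/-- The bias functional `g(s)` from Theorem MSE. -/
def gfun (d : ℕ) (f : (Fin d → ℝ) → ℝ) (s : Fin d → ℝ) : ℝ :=
  (∑ i, (1 - ((d : ℝ) + 1) * s i) * fderiv ℝ f s (Pi.single i 1)) +
    (1 / 2) * ∑ i, ∑ j, s i * ((if i = j then (1 : ℝ) else 0) - s j) *
      fderiv ℝ (fun t => fderiv ℝ f t (Pi.single i 1)) s (Pi.single j 1)

/-- The centered kernel variable `Ξ_{i,n}(s)`. -/
def Xi {Ω : Type*} [MeasurableSpace Ω] (P : Measure Ω) {d : ℕ}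
    (X : ℕ → Ω → (Fin d → ℝ)) (s : Fin d → ℝ) (b : ℝ) (i : ℕ) (ω : Ω) : ℝ :=
  kappa d s b (X i ω) - ∫ ω', kappa d s b (X i ω') ∂P

/-- The `j`-th big block of indices `I_j`. -/
def bigBlock (pn qn j : ℕ) : Finset ℕ :=
  Finset.Icc ((j - 1) * (pn + qn) + 1) ((j - 1) * (pn + qn) + pn)

/-- The `j`-th small block of indices `J_j`. -/
def smallBlock (pn qn j : ℕ) : Finset ℕ :=
  Finset.Icc ((j - 1) * (pn + qn) + pn + 1) (j * (pn + qn))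

/-- Assumption (A2): pairwise joint densities exist and the local dependence
functions `h_{i,j} = f_{X_i,X_j} - f_{X_i} f_{X_j}` have uniformly bounded `L^p` norms. -/
def AssumpA2 {Ω : Type*} [MeasurableSpace Ω] (P : Measure Ω) {d : ℕ}
    (X : ℕ → Ω → (Fin d → ℝ)) (f : (Fin d → ℝ) → ℝ) (p : ℝ) : Prop :=
  ∃ fpair : ℕ → ℕ → ((Fin d → ℝ) × (Fin d → ℝ)) → ℝ,
    (∀ i j : ℕ, 1 ≤ i → 1 ≤ j → i ≠ j →
      Measure.map (fun ω => (X i ω, X j ω)) P =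
        volume.withDensity (fun z => ENNReal.ofReal (fpair i j z))) ∧
    (∀ i j : ℕ, 1 ≤ i → 1 ≤ j → i ≠ j →
      Integrable (fun z => |fpair i j z - f z.1 * f z.2| ^ p)
        (volume.restrict (Sd d ×ˢ Sd d))) ∧
    ∃ C : ℝ, ∀ i j : ℕ, 1 ≤ i → 1 ≤ j → i ≠ j →
      (∫ z in Sd d ×ˢ Sd d, |fpair i j z - f z.1 * f z.2| ^ p) ^ (1 / p) ≤ C

/-- Stirling ratio `R(z) = √(2π) e^{-z} z^{z+1/2} / Γ(z+1)`. -/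
def Rfun (z : ℝ) : ℝ :=
  Real.sqrt (2 * π) * Real.exp (-z) * z ^ (z + 1 / 2) / Real.Gamma (z + 1)

end

/-!
Fix `b ≤ 1`. Stirling's formula bounds `κ_{s,b}` by a multiple of a product Gaussian density with
variance of order `b`, so that `sup κ_{s,b} = O(b^{-d/2})` and `‖κ_{s,b}‖_q = O(b^{-d/(2p)})`. Hence
`Cov(κ(X_i), κ(X_j))` has two bounds: Hölder's inequality against `h_{i,j}` gives `O(b^{-d/p})` for
every lag, while mixing gives `O(b^{-d} |i - j|^{-ν})`. Summing the smaller of the two, with the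
cut-off at the lag `⌈b^{-d/(νq)}⌉` where they balance, yields the `O` bound; its exponent beats
`d/2` precisely because `ν > 2(p-1)/(p-2)`.

Neither `f` nor `fpair i j` is assumed measurable separately, only `|h_{i,j}|^p` is integrable.
The Hölder step therefore compares the joint law and the product of the marginals as measures:
each is at most the other plus the measure with density `|h_{i,j}|`.
-/

open scoped ENNReal

section NonmeasurableDensities

variable {α β : Type*} [MeasurableSpace α] [MeasurableSpace β] {μ : Measure α} {ν : Measure β}

lemma lintegral_mul_le_lintegral_withDensity (F : α → ℝ≥0∞) {k : α → ℝ≥0∞} (hk : Measurable k)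
    (hk_top : ∀ x, k x ≠ ∞) :
    ∫⁻ x, k x * F x ∂μ ≤ ∫⁻ x, k x ∂(μ.withDensity F) := by
  obtain ⟨g, hg, hgF, hint⟩ := exists_measurable_le_lintegral_eq (μ.withDensity k) F
  calc ∫⁻ x, k x * F x ∂μ = ∫⁻ x, F x ∂(μ.withDensity k) :=
        (lintegral_withDensity_eq_lintegral_mul_non_measurable μ hk
          (.of_forall fun x => (hk_top x).lt_top) F).symm
    _ = ∫⁻ x, (k * g) x ∂μ := by rw [hint, lintegral_withDensity_eq_lintegral_mul μ hk hg]
    _ = ∫⁻ x, k x ∂(μ.withDensity g) := by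
        rw [lintegral_withDensity_eq_lintegral_mul μ hg hk, mul_comm]
    _ ≤ ∫⁻ x, k x ∂(μ.withDensity F) :=
        lintegral_mono' (withDensity_mono (.of_forall hgF)) le_rfl

lemma withDensity_prod_withDensity [SFinite μ] [SFinite ν] {F : α → ℝ≥0∞} {G : β → ℝ≥0∞}
    (hF_top : ∀ x, F x ≠ ∞) [IsFiniteMeasure (ν.withDensity G)] :
    (μ.withDensity F).prod (ν.withDensity G) =
      (μ.prod ν).withDensity (fun z => F z.1 * G z.2) := by
  refine le_antisymm ?_ (Measure.le_iff.2 fun A hA => ?_)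
  · obtain ⟨F', hF', hF'F, hF'_eq⟩ := exists_measurable_le_withDensity_eq μ F
    obtain ⟨G', hG', hG'G, hG'_eq⟩ := exists_measurable_le_withDensity_eq ν G
    rw [← hF'_eq, ← hG'_eq, prod_withDensity hF' hG']
    exact withDensity_mono (.of_forall fun z => mul_le_mul' (hF'F z.1) (hG'G z.2))
  · have hslice : ∀ x, ∫⁻ y, A.indicator (fun z => F z.1 * G z.2) (x, y) ∂ν =
        ν.withDensity G (Prod.mk x ⁻¹' A) * F x := fun x => by
      rw [withDensity_apply _ (measurable_prodMk_left hA),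
        ← lintegral_indicator (measurable_prodMk_left hA), mul_comm,
        ← lintegral_const_mul' _ _ (hF_top x)]
      congr with y
      by_cases hy : (x, y) ∈ A <;> simp [hy]
    rw [withDensity_apply _ hA, ← lintegral_indicator hA, Measure.prod_apply hA]
    calc ∫⁻ z, A.indicator (fun z => F z.1 * G z.2) z ∂(μ.prod ν)
        ≤ ∫⁻ x, ∫⁻ y, A.indicator (fun z => F z.1 * G z.2) (x, y) ∂ν ∂μ := lintegral_prod_le _
      _ = ∫⁻ x, ν.withDensity G (Prod.mk x ⁻¹' A) * F x ∂μ := lintegral_congr hslice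
      _ ≤ ∫⁻ x, ν.withDensity G (Prod.mk x ⁻¹' A) ∂(μ.withDensity F) :=
          lintegral_mul_le_lintegral_withDensity F (measurable_measure_prodMk_left hA)
            fun x => measure_ne_top _ _

lemma exists_measurableSet_ae_mem_withDensity [SFinite μ] (F : α → ℝ≥0∞) :
    ∃ V, MeasurableSet V ∧ (∀ x ∈ V, F x ≠ 0) ∧ ∀ᵐ x ∂(μ.withDensity F), x ∈ V := by
  obtain ⟨g, hg, hgF, hg_eq⟩ := exists_measurable_le_withDensity_eq μ F
  refine ⟨{x | g x ≠ 0}, (measurableSet_eq_fun hg measurable_const).compl,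
    fun x hx hFx => hx (le_antisymm (hFx ▸ hgF x) bot_le), ?_⟩
  rw [← hg_eq]
  exact (ae_withDensity_iff hg).2 (.of_forall fun x hx => hx)

lemma withDensity_le_withDensity_add {F G H : α → ℝ≥0∞} (hH : AEMeasurable H μ) {W : Set α}
    (hW : MeasurableSet W) (hFGH : ∀ x ∈ W, F x ≤ G x + H x)
    (hFW : ∀ᵐ x ∂(μ.withDensity F), x ∈ W) :
    μ.withDensity F ≤ μ.withDensity G + μ.withDensity H := by
  rw [withDensity_congr_ae hH.ae_eq_mk, ← withDensity_add_right G hH.measurable_mk]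
  calc μ.withDensity F = (μ.restrict W).withDensity F := by
        rw [← restrict_withDensity hW, Measure.restrict_eq_self_of_ae_mem hFW]
    _ ≤ (μ.restrict W).withDensity (G + hH.mk H) := by
        refine withDensity_mono ?_
        filter_upwards [ae_restrict_mem hW, ae_restrict_of_ae hH.ae_eq_mk] with x hx hmk
        exact (hFGH x hx).trans_eq (congrArg (G x + ·) hmk)
    _ ≤ μ.withDensity (G + hH.mk H) := by
        rw [← restrict_withDensity hW]
        exact Measure.restrict_le_self

lemma ae_mem_prod_of_marginals {J : Measure (α × β)} {V : Set α} {W : Set β}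
    (hV : ∀ᵐ x ∂(J.map Prod.fst), x ∈ V) (hW : ∀ᵐ y ∂(J.map Prod.snd), y ∈ W) :
    ∀ᵐ z ∂J, z ∈ V ×ˢ W := by
  filter_upwards [ae_of_ae_map measurable_fst.aemeasurable hV,
    ae_of_ae_map measurable_snd.aemeasurable hW] with z hz₁ hz₂ using ⟨hz₁, hz₂⟩

lemma ofReal_le_ofReal_add_ofReal_abs_sub (x y : ℝ) :
    ENNReal.ofReal x ≤ ENNReal.ofReal y + ENNReal.ofReal |x - y| :=
  (ENNReal.ofReal_le_ofReal (by linarith [le_abs_self (x - y)])).trans ENNReal.ofReal_add_le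

lemma joint_and_prod_marginals_le_add [SFinite μ] [SFinite ν] {f : α → ℝ} {g : β → ℝ}
    {h : α × β → ℝ} {J : Measure (α × β)} [IsFiniteMeasure J]
    (hJ : J = (μ.prod ν).withDensity fun z => ENNReal.ofReal (h z))
    (hf : J.map Prod.fst = μ.withDensity fun x => ENNReal.ofReal (f x))
    (hg : J.map Prod.snd = ν.withDensity fun y => ENNReal.ofReal (g y))
    (hdiff : AEMeasurable (fun z => |h z - f z.1 * g z.2|) (μ.prod ν)) :
    J ≤ (J.map Prod.fst).prod (J.map Prod.snd) +
        (μ.prod ν).withDensity (fun z => ENNReal.ofReal |h z - f z.1 * g z.2|) ∧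
      (J.map Prod.fst).prod (J.map Prod.snd) ≤
        J + (μ.prod ν).withDensity (fun z => ENNReal.ofReal |h z - f z.1 * g z.2|) := by
  obtain ⟨V, hV, hfV, hVae⟩ := exists_measurableSet_ae_mem_withDensity (μ := μ)
    fun x => ENNReal.ofReal (f x)
  obtain ⟨W, hW, hgW, hWae⟩ := exists_measurableSet_ae_mem_withDensity (μ := ν)
    fun y => ENNReal.ofReal (g y)
  rw [← hf] at hVae
  rw [← hg] at hWae
  have : IsFiniteMeasure (ν.withDensity fun y => ENNReal.ofReal (g y)) := hg ▸ inferInstance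
  have hprod : (J.map Prod.fst).prod (J.map Prod.snd) = (μ.prod ν).withDensity
      (fun z => ENNReal.ofReal (f z.1) * ENNReal.ofReal (g z.2)) := by
    rw [hf, hg, withDensity_prod_withDensity fun x => ENNReal.ofReal_ne_top]
  have hfg : ∀ z ∈ V ×ˢ W,
      ENNReal.ofReal (f z.1) * ENNReal.ofReal (g z.2) = ENNReal.ofReal (f z.1 * g z.2) :=
    fun z hz => (ENNReal.ofReal_mul
      (ENNReal.ofReal_pos.1 (pos_iff_ne_zero.2 (hfV z.1 hz.1))).le).symm
  have hJVW : ∀ᵐ z ∂J, z ∈ V ×ˢ W := ae_mem_prod_of_marginals hVae hWae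
  have hprodVW : ∀ᵐ z ∂((J.map Prod.fst).prod (J.map Prod.snd)), z ∈ V ×ˢ W := by
    filter_upwards [Measure.quasiMeasurePreserving_fst.ae hVae,
      Measure.quasiMeasurePreserving_snd.ae hWae] with z hz₁ hz₂ using ⟨hz₁, hz₂⟩
  rw [hprod] at hprodVW ⊢
  rw [hJ] at hJVW ⊢
  exact ⟨withDensity_le_withDensity_add hdiff.ennreal_ofReal (hV.prod hW)
      (fun z hz => hfg z hz ▸ ofReal_le_ofReal_add_ofReal_abs_sub _ _) hJVW,
    withDensity_le_withDensity_add hdiff.ennreal_ofReal (hV.prod hW)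
      (fun z hz => hfg z hz ▸ abs_sub_comm (h z) _ ▸ ofReal_le_ofReal_add_ofReal_abs_sub _ _)
      hprodVW⟩

end NonmeasurableDensities

section HolderCovariance

variable {α β : Type*} [MeasurableSpace α] [MeasurableSpace β] {μ : Measure α} {ν : Measure β}

lemma abs_integral_sub_integral_le_of_le_add {J K E : Measure α} (hJK : J ≤ K + E)
    (hKJ : K ≤ J + E) {F : α → ℝ} (hFK : 0 ≤ᵐ[K] F) (hFE : 0 ≤ᵐ[E] F) (hK : Integrable F K)
    (hE : Integrable F E) : |∫ x, F x ∂J - ∫ x, F x ∂K| ≤ ∫ x, F x ∂E := by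
  have hFKE : 0 ≤ᵐ[K + E] F := ae_add_measure_iff.2 ⟨hFK, hFE⟩
  have hJ : Integrable F J := (hK.add_measure hE).mono_measure hJK
  have h₁ : ∫ x, F x ∂J ≤ ∫ x, F x ∂K + ∫ x, F x ∂E :=
    (integral_mono_measure hJK hFKE (hK.add_measure hE)).trans_eq
      (integral_add_measure hK hE)
  have h₂ : ∫ x, F x ∂K ≤ ∫ x, F x ∂J + ∫ x, F x ∂E :=
    (integral_mono_measure hKJ (ae_add_measure_iff.2 ⟨ae_mono hJK hFKE, hFE⟩)
      (hJ.add_measure hE)).trans_eq (integral_add_measure hJ hE)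
  exact abs_sub_le_iff.2 ⟨by linarith, by linarith⟩

lemma memLp_of_integrable_abs_rpow {p : ℝ} (hp : 0 < p) {F : α → ℝ}
    (hF : Integrable (fun x => |F x| ^ p) μ) :
    MemLp (fun x => |F x|) (ENNReal.ofReal p) μ := by
  have hmeas : AEStronglyMeasurable (fun x => |F x|) μ := by
    refine ((hF.aemeasurable.pow_const p⁻¹).congr (.of_forall fun x => ?_)).aestronglyMeasurable
    exact Real.rpow_rpow_inv (abs_nonneg _) hp.ne'
  rw [← integrable_norm_rpow_iff hmeas (by simpa using hp) ENNReal.ofReal_ne_top,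
    ENNReal.toReal_ofReal hp.le]
  simpa using hF

lemma memLp_prod_mul {q : ℝ} (hq : 0 < q) {φ : α → ℝ} {ψ : β → ℝ}
    (hφ : MemLp φ (ENNReal.ofReal q) μ) (hψ : MemLp ψ (ENNReal.ofReal q) ν) :
    MemLp (fun z : α × β => φ z.1 * ψ z.2) (ENNReal.ofReal q) (μ.prod ν) := by
  have hq' : ENNReal.ofReal q ≠ 0 := by simpa using hq
  have hmeas : AEStronglyMeasurable (fun z : α × β => φ z.1 * ψ z.2) (μ.prod ν) :=
    hφ.1.comp_fst.mul hψ.1.comp_snd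
  rw [← integrable_norm_rpow_iff hmeas hq' ENNReal.ofReal_ne_top]
  simp_rw [norm_mul, Real.mul_rpow (norm_nonneg _) (norm_nonneg _)]
  exact (hφ.integrable_norm_rpow hq' ENNReal.ofReal_ne_top).mul_prod
    (hψ.integrable_norm_rpow hq' ENNReal.ofReal_ne_top)

lemma ae_prod_nonneg {φ : α → ℝ} {ψ : β → ℝ} (hφ : 0 ≤ᵐ[μ] φ)
    (hψ : 0 ≤ᵐ[ν] ψ) : ∀ᵐ z ∂(μ.prod ν), 0 ≤ φ z.1 ∧ 0 ≤ ψ z.2 := by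
  filter_upwards [Measure.quasiMeasurePreserving_fst.ae hφ,
    Measure.quasiMeasurePreserving_snd.ae hψ] with z hz₁ hz₂ using ⟨hz₁, hz₂⟩

lemma integral_abs_mul_prod_le [SFinite μ] [SFinite ν] {p q : ℝ} (hpq : p.HolderConjugate q)
    {φ : α → ℝ} {ψ : β → ℝ} (hφ : 0 ≤ᵐ[μ] φ) (hψ : 0 ≤ᵐ[ν] ψ)
    (hφq : MemLp φ (ENNReal.ofReal q) μ) (hψq : MemLp ψ (ENNReal.ofReal q) ν) {h : α × β → ℝ}
    (hh : MemLp (fun z => |h z|) (ENNReal.ofReal p) (μ.prod ν)) :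
    ∫ z, |h z| * (φ z.1 * ψ z.2) ∂(μ.prod ν) ≤
      (∫ z, |h z| ^ p ∂(μ.prod ν)) ^ (1 / p) *
        ((∫ x, φ x ^ q ∂μ) ^ (1 / q) * (∫ y, ψ y ^ q ∂ν) ^ (1 / q)) := by
  have hφψ := ae_prod_nonneg hφ hψ
  have hpow : ∫ z, (φ z.1 * ψ z.2) ^ q ∂(μ.prod ν) = (∫ x, φ x ^ q ∂μ) * ∫ y, ψ y ^ q ∂ν := by
    rw [← integral_prod_mul (fun x => φ x ^ q) (fun y => ψ y ^ q)]
    refine integral_congr_ae ?_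
    filter_upwards [hφψ] with z hz using Real.mul_rpow hz.1 hz.2
  refine (integral_mul_le_Lp_mul_Lq_of_nonneg hpq (.of_forall fun z => abs_nonneg _)
    (hφψ.mono fun z hz => mul_nonneg hz.1 hz.2) hh
    (memLp_prod_mul hpq.symm.pos hφq hψq)).trans_eq ?_
  rw [hpow, Real.mul_rpow
    (integral_nonneg_of_ae (hφ.mono fun x hx => Real.rpow_nonneg hx q))
    (integral_nonneg_of_ae (hψ.mono fun y hy => Real.rpow_nonneg hy q))]

theorem abs_integral_joint_sub_mul_le [SFinite μ] [SFinite ν] {p q : ℝ}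
    (hpq : p.HolderConjugate q) {f : α → ℝ} {g : β → ℝ} {h : α × β → ℝ} {J : Measure (α × β)}
    [IsFiniteMeasure J] (hJ : J = (μ.prod ν).withDensity fun z => ENNReal.ofReal (h z))
    (hf : J.map Prod.fst = μ.withDensity fun x => ENNReal.ofReal (f x))
    (hg : J.map Prod.snd = ν.withDensity fun y => ENNReal.ofReal (g y))
    (hdiff : Integrable (fun z => |h z - f z.1 * g z.2| ^ p) (μ.prod ν))
    {φ : α → ℝ} {ψ : β → ℝ} (hφ : 0 ≤ᵐ[μ] φ) (hψ : 0 ≤ᵐ[ν] ψ)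
    (hφ_int : Integrable φ (J.map Prod.fst)) (hψ_int : Integrable ψ (J.map Prod.snd))
    (hφq : MemLp φ (ENNReal.ofReal q) μ) (hψq : MemLp ψ (ENNReal.ofReal q) ν) :
    |∫ z, φ z.1 * ψ z.2 ∂J - (∫ x, φ x ∂(J.map Prod.fst)) * ∫ y, ψ y ∂(J.map Prod.snd)| ≤
      (∫ z, |h z - f z.1 * g z.2| ^ p ∂(μ.prod ν)) ^ (1 / p) *
        ((∫ x, φ x ^ q ∂μ) ^ (1 / q) * (∫ y, ψ y ^ q ∂ν) ^ (1 / q)) := by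
  have hdiffp := memLp_of_integrable_abs_rpow hpq.pos hdiff
  have hdiff_meas := hdiffp.1.aemeasurable.ennreal_ofReal
  have hlt : ∀ᵐ z ∂(μ.prod ν), ENNReal.ofReal |h z - f z.1 * g z.2| < ∞ :=
    .of_forall fun z => ENNReal.ofReal_lt_top
  have hφψ : ∀ᵐ z ∂(μ.prod ν), 0 ≤ φ z.1 * ψ z.2 :=
    (ae_prod_nonneg hφ hψ).mono fun z hz => mul_nonneg hz.1 hz.2
  have hac : (J.map Prod.fst).prod (J.map Prod.snd) ≪ μ.prod ν := by
    rw [hf, hg]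
    exact (withDensity_absolutelyContinuous _ _).prod (withDensity_absolutelyContinuous _ _)
  have : ENNReal.HolderConjugate (ENNReal.ofReal p) (ENNReal.ofReal q) := hpq.ennrealOfReal
  have hE : Integrable (fun z => φ z.1 * ψ z.2)
      ((μ.prod ν).withDensity fun z => ENNReal.ofReal |h z - f z.1 * g z.2|) := by
    rw [integrable_withDensity_iff_integrable_smul₀' hdiff_meas hlt]
    simp_rw [ENNReal.toReal_ofReal (abs_nonneg _)]
    exact hdiffp.integrable_mul (memLp_prod_mul hpq.symm.pos hφq hψq)
  obtain ⟨hle, hge⟩ := joint_and_prod_marginals_le_add hJ hf hg hdiffp.1.aemeasurable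
  rw [← integral_prod_mul φ ψ]
  refine (abs_integral_sub_integral_le_of_le_add hle hge (hac.ae_le hφψ)
    ((withDensity_absolutelyContinuous _ _).ae_le hφψ) (hφ_int.mul_prod hψ_int) hE).trans ?_
  rw [integral_withDensity_eq_integral_toReal_smul₀ hdiff_meas hlt]
  simp_rw [ENNReal.toReal_ofReal (abs_nonneg _), smul_eq_mul]
  exact integral_abs_mul_prod_le hpq hφ hψ hφq hψq hdiffp

end HolderCovariance

section GammaBounds

/-- The order of magnitude `z ^ z * √z * exp (-z)` of `Γ(z + 1)` in Stirling's formula, normalised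
without the constant `√(2π)`. -/
noncomputable def stirlingScale (z : ℝ) : ℝ :=
  z ^ z * √z * Real.exp (-z)

lemma stirlingScale_pos {z : ℝ} (hz : 0 < z) : 0 < stirlingScale z := by
  unfold stirlingScale; positivity

lemma sub_sq_div_two_le_log_one_add {w : ℝ} (hw : 0 ≤ w) : w - w ^ 2 / 2 ≤ Real.log (1 + w) := by
  refine le_trans ?_ (Real.le_log_one_add_of_nonneg hw)
  rw [le_div_iff₀ (by linarith)]
  nlinarith [pow_nonneg hw 3]

/-- Within `√z` to the right of its peak at `z`, the integrand of `Γ(z + 1)` keeps its size. -/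
lemma exp_neg_half_mul_peak_le {z t : ℝ} (hz : 0 < z) (ht : t ∈ Set.Ioc z (z + √z)) :
    Real.exp (-(1 / 2)) * (z ^ z * Real.exp (-z)) ≤ Real.exp (-t) * t ^ z := by
  have ht0 : 0 < t := hz.trans ht.1
  have hw : 0 ≤ (t - z) / z := div_nonneg (by linarith [ht.1]) hz.le
  have hlog : (t - z) / z - ((t - z) / z) ^ 2 / 2 ≤ Real.log t - Real.log z := by
    have h := sub_sq_div_two_le_log_one_add hw
    rwa [show 1 + (t - z) / z = t / z by field_simp; ring,
      Real.log_div ht0.ne' hz.ne'] at h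
  have hsq : (t - z) ^ 2 / z ≤ 1 := by
    rw [div_le_one hz]
    exact (pow_le_pow_left₀ (by linarith [ht.1]) (by linarith [ht.2]) 2).trans_eq
      (Real.sq_sqrt hz.le)
  have hexp : t - z - (t - z) ^ 2 / z / 2 ≤ z * (Real.log t - Real.log z) :=
    calc t - z - (t - z) ^ 2 / z / 2 = z * ((t - z) / z - ((t - z) / z) ^ 2 / 2) := by
          field_simp
      _ ≤ z * (Real.log t - Real.log z) := mul_le_mul_of_nonneg_left hlog hz.le
  rw [Real.rpow_def_of_pos hz, Real.rpow_def_of_pos ht0, ← Real.exp_add, ← Real.exp_add,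
    ← Real.exp_add]
  exact Real.exp_le_exp.2 (by linarith)

lemma exp_neg_half_mul_stirlingScale_le_Gamma {z : ℝ} (hz : 0 < z) :
    Real.exp (-(1 / 2)) * stirlingScale z ≤ Real.Gamma (z + 1) := by
  have hsub : Set.Ioc z (z + √z) ⊆ Set.Ioi 0 := fun t ht => hz.trans ht.1
  have hint : IntegrableOn (fun t => Real.exp (-t) * t ^ z) (Set.Ioi 0) := by
    simpa using Real.GammaIntegral_convergent (s := z + 1) (by linarith)
  calc Real.exp (-(1 / 2)) * stirlingScale z
      = ∫ _ in Set.Ioc z (z + √z), Real.exp (-(1 / 2)) * (z ^ z * Real.exp (-z)) := by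
        simp only [stirlingScale, integral_const, measureReal_restrict_apply_univ,
          Real.volume_real_Ioc, add_sub_cancel_left, max_eq_left (Real.sqrt_nonneg z), smul_eq_mul]
        ring
    _ ≤ ∫ t in Set.Ioc z (z + √z), Real.exp (-t) * t ^ z :=
        setIntegral_mono_on (integrableOn_const (by simp)) (hint.mono_set hsub) measurableSet_Ioc
          fun t ht => exp_neg_half_mul_peak_le hz ht
    _ ≤ ∫ t in Set.Ioi 0, Real.exp (-t) * t ^ z := by
        refine setIntegral_mono_set hint ?_ hsub.eventuallyLE
        filter_upwards [ae_restrict_mem measurableSet_Ioi] with t ht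
        exact mul_nonneg (Real.exp_pos _).le (Real.rpow_nonneg (le_of_lt ht) _)
    _ = Real.Gamma (z + 1) := by
        simp only [Real.Gamma_eq_integral (by linarith : 0 < z + 1), add_sub_cancel_right]

lemma factorial_le_exp_one_mul_stirlingScale {n : ℕ} (hn : n ≠ 0) :
    (n.factorial : ℝ) ≤ Real.exp 1 * stirlingScale n := by
  obtain ⟨k, rfl⟩ := Nat.exists_eq_succ_of_ne_zero hn
  have h := Stirling.stirlingSeq'_antitone (Nat.zero_le k)
  simp only [Function.comp, Nat.succ_eq_add_one, zero_add] at h ⊢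
  rw [Stirling.stirlingSeq_one, Stirling.stirlingSeq, div_le_iff₀ (by positivity)] at h
  refine h.trans_eq ?_
  rw [stirlingScale, Real.rpow_natCast, div_pow, ← Real.exp_nat_mul, Real.exp_neg,
    Real.sqrt_mul (by norm_num), mul_one]
  field_simp

lemma Gamma_add_one_le_factorial_mul_rpow {n : ℕ} {z : ℝ} (hnz : n ≤ z) (hzn : z < n + 1) :
    Real.Gamma (z + 1) ≤ n.factorial * ((n : ℝ) + 1) ^ (z - n) := by
  rcases hnz.eq_or_lt with rfl | hnz
  · simp [Real.Gamma_nat_eq_factorial]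
  have hfac : (0 : ℝ) < n.factorial := by positivity
  have hΓ : Real.Gamma (n + 2) = (n + 1) * n.factorial := by
    rw [show (n : ℝ) + 2 = n + 1 + 1 by ring, Real.Gamma_add_one (by positivity),
      Real.Gamma_nat_eq_factorial]
  have hconv := Real.Gamma_mul_add_mul_le_rpow_Gamma_mul_rpow_Gamma (s := n + 1) (t := n + 2)
    (a := n + 1 - z) (b := z - n) (by positivity) (by positivity) (by linarith) (by linarith)
    (by ring)
  rw [show (n + 1 - z) * ((n : ℝ) + 1) + (z - n) * (n + 2) = z + 1 by ring, hΓ,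
    Real.Gamma_nat_eq_factorial, Real.mul_rpow (by positivity) hfac.le, mul_left_comm,
    ← Real.rpow_add hfac] at hconv
  simpa [mul_comm] using hconv

lemma Gamma_add_one_le_stirlingScale {z : ℝ} (hz : 1 ≤ z) :
    Real.Gamma (z + 1) ≤ 2 * Real.exp 1 ^ 2 * stirlingScale z := by
  have hz0 : 0 < z := by linarith
  set n := ⌊z⌋₊
  have hn : n ≠ 0 := (Nat.floor_pos.2 hz).ne'
  have : (1 : ℝ) ≤ n := by exact_mod_cast Nat.one_le_iff_ne_zero.2 hn
  have hnz : (n : ℝ) ≤ z := Nat.floor_le hz0.le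
  have hzn : z < n + 1 := Nat.lt_floor_add_one z
  have hscale : stirlingScale n ≤ z ^ (n : ℝ) * √z * (Real.exp 1 * Real.exp (-z)) := by
    unfold stirlingScale
    rw [← Real.exp_add]
    gcongr
    linarith
  have hpow : ((n : ℝ) + 1) ^ (z - n) ≤ 2 * z ^ (z - n) :=
    calc ((n : ℝ) + 1) ^ (z - n) ≤ (2 * z) ^ (z - n) := by gcongr; linarith
      _ = 2 ^ (z - n) * z ^ (z - n) := Real.mul_rpow (by norm_num) hz0.le
      _ ≤ 2 * z ^ (z - n) := by
          gcongr
          exact Real.rpow_le_self_of_one_le (by norm_num) (by linarith)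
  have hzz : z ^ (n : ℝ) * z ^ (z - n) = z ^ z := by
    rw [← Real.rpow_add hz0, add_sub_cancel]
  calc Real.Gamma (z + 1)
      ≤ n.factorial * ((n : ℝ) + 1) ^ (z - n) := Gamma_add_one_le_factorial_mul_rpow hnz hzn
    _ ≤ Real.exp 1 * (z ^ (n : ℝ) * √z * (Real.exp 1 * Real.exp (-z))) * (2 * z ^ (z - n)) := by
        gcongr
        exact (factorial_le_exp_one_mul_stirlingScale hn).trans (by gcongr)
    _ = 2 * Real.exp 1 ^ 2 * (z ^ (n : ℝ) * z ^ (z - n) * √z * Real.exp (-z)) := by ring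
    _ = 2 * Real.exp 1 ^ 2 * stirlingScale z := by rw [hzz, stirlingScale]

lemma exists_Gamma_add_le_stirlingScale (d : ℕ) : ∃ C : ℝ, 0 < C ∧ ∀ z : ℝ, 1 ≤ z →
    Real.Gamma (z + d + 1) ≤ C * (z ^ d * stirlingScale z) := by
  induction d with
  | zero =>
    exact ⟨2 * Real.exp 1 ^ 2, by positivity, fun z hz => by
      simpa using Gamma_add_one_le_stirlingScale hz⟩
  | succ d ih =>
    obtain ⟨C, hC, hΓ⟩ := ih
    refine ⟨(d + 2) * C, by positivity, fun z hz => ?_⟩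
    have : 0 < z := by linarith
    have hlin : z + d + 1 ≤ (d + 2) * z := by nlinarith [(Nat.cast_nonneg d : (0 : ℝ) ≤ d)]
    calc Real.Gamma (z + (d + 1 : ℕ) + 1) = (z + d + 1) * Real.Gamma (z + d + 1) := by
          rw [← Real.Gamma_add_one (by positivity : z + d + 1 ≠ 0)]
          push_cast
          ring_nf
      _ ≤ (d + 2) * z * (C * (z ^ d * stirlingScale z)) :=
          mul_le_mul hlin (hΓ z hz) (Real.Gamma_nonneg_of_nonneg (by positivity)) (by positivity)
      _ = (d + 2) * C * (z ^ (d + 1) * stirlingScale z) := by ring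

end GammaBounds

section KernelBounds

variable {d : ℕ} {s : Fin d → ℝ}

lemma mul_log_sub_log_le {x a : ℝ} (hx0 : 0 < x) (hx1 : x ≤ 1) (ha0 : 0 < a) (ha1 : a ≤ 1) :
    a * (Real.log x - Real.log a) ≤ x - a - (x - a) ^ 2 / 4 := by
  have hlog : Real.log x - Real.log a = 2 * Real.log (√x / √a) := by
    rw [Real.log_div (by positivity) (by positivity), Real.log_sqrt hx0.le, Real.log_sqrt ha0.le]
    ring
  have hratio : a * (√x / √a) = √a * √x := by
    rw [mul_div_assoc', div_eq_iff (by positivity), mul_right_comm, Real.mul_self_sqrt ha0.le]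
  have hsq : (x - a) ^ 2 ≤ 4 * (√x - √a) ^ 2 :=
    calc (x - a) ^ 2 = (√x + √a) ^ 2 * (√x - √a) ^ 2 := by
          rw [← mul_pow, ← sq_sub_sq, Real.sq_sqrt hx0.le, Real.sq_sqrt ha0.le]
      _ ≤ 2 ^ 2 * (√x - √a) ^ 2 := by
          gcongr
          linarith [Real.sqrt_le_one.2 hx1, Real.sqrt_le_one.2 ha1]
      _ = 4 * (√x - √a) ^ 2 := by norm_num
  calc a * (Real.log x - Real.log a) = 2 * (a * Real.log (√x / √a)) := by rw [hlog]; ring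
    _ ≤ 2 * (a * (√x / √a - 1)) := by
        gcongr
        exact Real.log_le_sub_one_of_pos (by positivity)
    _ = x - a - (√x - √a) ^ 2 := by
        rw [mul_sub, hratio, sub_sq, Real.sq_sqrt hx0.le, Real.sq_sqrt ha0.le]
        ring
    _ ≤ x - a - (x - a) ^ 2 / 4 := by linarith

lemma rpow_div_le_rpow_div_mul_exp {x a b : ℝ} (hx0 : 0 ≤ x) (hx1 : x ≤ 1) (ha0 : 0 < a)
    (ha1 : a ≤ 1) (hb : 0 < b) :
    x ^ (a / b) ≤ a ^ (a / b) * Real.exp ((x - a) / b) * Real.exp (-(x - a) ^ 2 / (4 * b)) := by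
  rcases hx0.eq_or_lt with rfl | hx0
  · rw [Real.zero_rpow (by positivity)]
    positivity
  rw [Real.rpow_def_of_pos hx0, Real.rpow_def_of_pos ha0, ← Real.exp_add, ← Real.exp_add]
  refine Real.exp_le_exp.2 ?_
  have h := div_le_div_of_nonneg_right (mul_log_sub_log_le hx0 hx1 ha0 ha1) hb.le
  calc Real.log x * (a / b) = Real.log a * (a / b) + a * (Real.log x - Real.log a) / b := by ring
    _ ≤ Real.log a * (a / b) + (x - a - (x - a) ^ 2 / 4) / b := by gcongr
    _ = Real.log a * (a / b) + (x - a) / b + -(x - a) ^ 2 / (4 * b) := by ring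

lemma rpow_div_Gamma_le {x a b : ℝ} (hx0 : 0 ≤ x) (hx1 : x ≤ 1) (ha0 : 0 < a) (ha1 : a ≤ 1)
    (hb : 0 < b) :
    x ^ (a / b) / Real.Gamma (a / b + 1) ≤ Real.exp (1 / 2) / √a *
      (√b * Real.exp (x / b) * b ^ (a / b)) * Real.exp (-(x - a) ^ 2 / (4 * b)) := by
  have hab : 0 < a / b := by positivity
  refine (div_le_div₀ (by positivity) (rpow_div_le_rpow_div_mul_exp hx0 hx1 ha0 ha1 hb)
    (mul_pos (Real.exp_pos _) (stirlingScale_pos hab))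
    (exp_neg_half_mul_stirlingScale_le_Gamma hab)).trans_eq ?_
  rw [stirlingScale, Real.div_rpow ha0.le hb.le, Real.sqrt_div ha0.le, sub_div, Real.exp_sub,
    Real.exp_neg, Real.exp_neg (a / b)]
  field_simp

lemma kappa_eq_Gamma_mul_prod (b : ℝ) (x : Fin d → ℝ) :
    kappa d s b x = Real.Gamma (1 / b + d + 1) *
      ((1 - ∑ i, x i) ^ ((1 - ∑ i, s i) / b) / Real.Gamma ((1 - ∑ i, s i) / b + 1)) *
      ∏ i, (x i ^ (s i / b) / Real.Gamma (s i / b + 1)) := by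
  have harg : ∑ i, (s i / b + 1) + ((1 - ∑ i, s i) / b + 1) = 1 / b + d + 1 := by
    rw [Finset.sum_add_distrib, ← Finset.sum_div]
    simp only [Finset.sum_const, Finset.card_univ, Fintype.card_fin, nsmul_eq_mul, mul_one]
    ring
  simp only [kappa, dirK, add_sub_cancel_right, harg, Finset.prod_div_distrib]
  ring

lemma one_div_pow_mul_stirlingScale_mul_prod {b : ℝ} (hb : 0 < b) (s x : Fin d → ℝ) :
    (1 / b) ^ d * stirlingScale (1 / b) *
      (√b * Real.exp ((1 - ∑ i, x i) / b) * b ^ ((1 - ∑ i, s i) / b)) *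
      ∏ i, (√b * Real.exp (x i / b) * b ^ (s i / b)) = b ^ (-(d : ℝ) / 2) := by
  have hexp : Real.exp ((1 - ∑ i, x i) / b) * Real.exp ((∑ i, x i) / b) = Real.exp (1 / b) := by
    rw [← Real.exp_add, ← add_div, sub_add_cancel]
  have hrpow : b ^ ((1 - ∑ i, s i) / b) * b ^ ((∑ i, s i) / b) = b ^ (1 / b) := by
    rw [← Real.rpow_add hb, ← add_div, sub_add_cancel]
  have hpow : (1 / b) ^ d * √b ^ d = b ^ (-(d : ℝ) / 2) := by
    rw [← mul_pow, one_div, Real.sqrt_eq_rpow, ← Real.rpow_neg_one, ← Real.rpow_add hb,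
      ← Real.rpow_mul_natCast hb.le]
    ring_nf
  simp only [Finset.prod_mul_distrib, Finset.prod_const, Finset.card_univ, Fintype.card_fin]
  rw [← Real.exp_sum, ← Real.rpow_sum_of_pos hb, ← Finset.sum_div, ← Finset.sum_div, stirlingScale,
    Real.div_rpow one_pos.le hb.le, Real.one_rpow, Real.sqrt_div one_pos.le, Real.sqrt_one,
    Real.exp_neg, ← hexp, ← hrpow, ← hpow]
  field_simp

lemma sum_nonneg_and_sum_le_one_of_mem_Sd {x : Fin d → ℝ} (hx : x ∈ Sd d) :
    0 ≤ ∑ i, x i ∧ ∑ i, x i ≤ 1 :=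
  ⟨Finset.sum_nonneg fun i _ => (hx.1 i).1,
    (Finset.sum_le_sum fun i _ => le_abs_self (x i)).trans hx.2⟩

lemma SdInt_subset_Sd : SdInt d ⊆ Sd d :=
  fun _ hs => ⟨fun i => Set.Ioo_subset_Icc_self (hs.1 i), hs.2.le⟩

lemma sum_lt_one_of_mem_SdInt (hs : s ∈ SdInt d) : ∑ i, s i < 1 :=
  (Finset.sum_le_sum fun i _ => le_abs_self (s i)).trans_lt hs.2

lemma kappa_nonneg (hs : s ∈ SdInt d) {b : ℝ} (hb : 0 < b) {x : Fin d → ℝ} (hx : x ∈ Sd d) :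
    0 ≤ kappa d s b x := by
  have hΓ : ∀ {a : ℝ}, 0 ≤ a → 0 ≤ Real.Gamma (a / b + 1) := fun ha =>
    Real.Gamma_nonneg_of_nonneg (by positivity)
  rw [kappa_eq_Gamma_mul_prod]
  refine mul_nonneg (mul_nonneg (Real.Gamma_nonneg_of_nonneg (by positivity)) (div_nonneg
    (Real.rpow_nonneg (sub_nonneg.2 (sum_nonneg_and_sum_le_one_of_mem_Sd hx).2) _)
    (hΓ (sub_nonneg.2 (sum_lt_one_of_mem_SdInt hs).le)))) (Finset.prod_nonneg fun i _ =>
      div_nonneg (Real.rpow_nonneg (hx.1 i).1 _) (hΓ (hs.1 i).1.le))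

lemma exists_kappa_le_gaussian (hs : s ∈ SdInt d) :
    ∃ C : ℝ, 0 < C ∧ ∀ b : ℝ, 0 < b → b ≤ 1 → ∀ x ∈ Sd d,
      kappa d s b x ≤ C * b ^ (-(d : ℝ) / 2) * ∏ i, Real.exp (-(x i - s i) ^ 2 / (4 * b)) := by
  obtain ⟨C, hC, hΓ⟩ := exists_Gamma_add_le_stirlingScale d
  have hs_sum : 0 ≤ ∑ i, s i := (sum_nonneg_and_sum_le_one_of_mem_Sd (SdInt_subset_Sd hs)).1
  have hσ0 : 0 < 1 - ∑ i, s i := sub_pos.2 (sum_lt_one_of_mem_SdInt hs)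
  have hprod : 0 < ∏ i, Real.exp (1 / 2) / √(s i) := Finset.prod_pos fun i _ =>
    div_pos (Real.exp_pos _) (Real.sqrt_pos.2 (hs.1 i).1)
  refine ⟨C * (Real.exp (1 / 2) / √(1 - ∑ i, s i)) * ∏ i, Real.exp (1 / 2) / √(s i),
    by positivity, fun b hb hb1 x hx => ?_⟩
  obtain ⟨hx_sum0, hx_sum1⟩ := sum_nonneg_and_sum_le_one_of_mem_Sd hx
  have hcoord0 : ∀ i, 0 ≤ x i ^ (s i / b) / Real.Gamma (s i / b + 1) := fun i =>
    div_nonneg (Real.rpow_nonneg (hx.1 i).1 _) (Real.Gamma_nonneg_of_nonneg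
      (add_nonneg (div_nonneg (hs.1 i).1.le hb.le) one_pos.le))
  have hlast : (1 - ∑ i, x i) ^ ((1 - ∑ i, s i) / b) / Real.Gamma ((1 - ∑ i, s i) / b + 1) ≤
      Real.exp (1 / 2) / √(1 - ∑ i, s i) *
        (√b * Real.exp ((1 - ∑ i, x i) / b) * b ^ ((1 - ∑ i, s i) / b)) :=
    (rpow_div_Gamma_le (by linarith) (by linarith) hσ0 (by linarith) hb).trans
      (mul_le_of_le_one_right (by positivity) (Real.exp_le_one_iff.2
        (div_nonpos_of_nonpos_of_nonneg (neg_nonpos.2 (sq_nonneg _)) (by positivity))))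
  have hcoord : ∏ i, (x i ^ (s i / b) / Real.Gamma (s i / b + 1)) ≤
      ∏ i, (Real.exp (1 / 2) / √(s i) * (√b * Real.exp (x i / b) * b ^ (s i / b)) *
        Real.exp (-(x i - s i) ^ 2 / (4 * b))) :=
    Finset.prod_le_prod (fun i _ => hcoord0 i) fun i _ =>
      rpow_div_Gamma_le (hx.1 i).1 (hx.1 i).2 (hs.1 i).1 (hs.1 i).2.le hb
  have hmain := hΓ (1 / b) ((one_le_div hb).2 hb1)
  rw [kappa_eq_Gamma_mul_prod, ← one_div_pow_mul_stirlingScale_mul_prod hb s x]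
  have hscale := stirlingScale_pos (one_div_pos.2 hb)
  refine (mul_le_mul (mul_le_mul hmain hlast (div_nonneg (Real.rpow_nonneg (by linarith) _)
    (Real.Gamma_nonneg_of_nonneg (by positivity))) (by positivity)) hcoord
    (Finset.prod_nonneg fun i _ => hcoord0 i) (by positivity)).trans_eq ?_
  simp only [Finset.prod_mul_distrib]
  ring

lemma measurableSet_Sd (d : ℕ) : MeasurableSet (Sd d) := by
  have hSd : Sd d = (⋂ i, (fun s : Fin d → ℝ => s i) ⁻¹' Set.Icc 0 1) ∩ {s | ∑ i, |s i| ≤ 1} := by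
    ext s; simp [Sd]
  rw [hSd]
  exact (MeasurableSet.iInter fun i => measurableSet_Icc.preimage (measurable_pi_apply i)).inter
    (measurableSet_le (by fun_prop) measurable_const)

lemma volume_Sd_lt_top (d : ℕ) : volume (Sd d) < ⊤ := by
  have hsub : Sd d ⊆ Set.Icc 0 1 := fun x hx => ⟨fun i => (hx.1 i).1, fun i => (hx.1 i).2⟩
  exact (measure_mono hsub).trans_lt isCompact_Icc.measure_lt_top

lemma measurable_kappa (b : ℝ) : Measurable (kappa d s b) := by
  unfold kappa dirK
  fun_prop

lemma exists_kappa_le (hs : s ∈ SdInt d) :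
    ∃ C : ℝ, 0 < C ∧ ∀ b : ℝ, 0 < b → b ≤ 1 → ∀ x ∈ Sd d,
      kappa d s b x ≤ C * b ^ (-(d : ℝ) / 2) := by
  obtain ⟨C, hC, hκ⟩ := exists_kappa_le_gaussian hs
  exact ⟨C, hC, fun b hb hb1 x hx => (hκ b hb hb1 x hx).trans
    (mul_le_of_le_one_right (by positivity) (Finset.prod_le_one (fun i _ => (Real.exp_pos _).le)
      fun i _ => Real.exp_le_one_iff.2 (div_nonpos_of_nonpos_of_nonneg
        (neg_nonpos.2 (sq_nonneg _)) (by positivity))))⟩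

lemma memLp_kappa (hs : s ∈ SdInt d) {b : ℝ} (hb : 0 < b) (hb1 : b ≤ 1) (r : ℝ≥0∞)
    {μ : Measure (Fin d → ℝ)} [IsFiniteMeasure μ] (hμ : ∀ᵐ x ∂μ, x ∈ Sd d) :
    MemLp (kappa d s b) r μ := by
  obtain ⟨C, -, hκ⟩ := exists_kappa_le hs
  refine MemLp.of_bound (measurable_kappa b).aestronglyMeasurable (C * b ^ (-(d : ℝ) / 2)) ?_
  filter_upwards [hμ] with x hx
  rw [Real.norm_of_nonneg (kappa_nonneg hs hb hx)]
  exact hκ b hb hb1 x hx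

lemma exp_neg_sub_sq_div_eq (b a x : ℝ) :
    Real.exp (-(x - a) ^ 2 / (4 * b)) = Real.exp (-(4 * b)⁻¹ * (x - a) ^ 2) := by
  ring_nf

lemma integrable_exp_neg_sub_sq_div {b : ℝ} (hb : 0 < b) (a : ℝ) :
    Integrable fun x : ℝ => Real.exp (-(x - a) ^ 2 / (4 * b)) := by
  simp_rw [exp_neg_sub_sq_div_eq]
  exact (integrable_exp_neg_mul_sq (by positivity : 0 < (4 * b)⁻¹)).comp_sub_right a

lemma integral_exp_neg_sub_sq_div (b a : ℝ) :
    ∫ x : ℝ, Real.exp (-(x - a) ^ 2 / (4 * b)) = √(4 * π) * √b := by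
  simp_rw [exp_neg_sub_sq_div_eq]
  rw [integral_sub_right_eq_self (fun x : ℝ => Real.exp (-(4 * b)⁻¹ * x ^ 2)) a,
    integral_gaussian, ← Real.sqrt_mul (by positivity), div_inv_eq_mul]
  ring_nf

lemma integrable_prod_exp_neg_sub_sq_div {b : ℝ} (hb : 0 < b) (s : Fin d → ℝ) :
    Integrable fun x : Fin d → ℝ => ∏ i, Real.exp (-(x i - s i) ^ 2 / (4 * b)) :=
  Integrable.fintype_prod (f := fun i (x : ℝ) => Real.exp (-(x - s i) ^ 2 / (4 * b)))
    (μ := fun _ => volume) fun i => integrable_exp_neg_sub_sq_div hb (s i)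

lemma integral_prod_exp_neg_sub_sq_div (b : ℝ) (s : Fin d → ℝ) :
    ∫ x : Fin d → ℝ, ∏ i, Real.exp (-(x i - s i) ^ 2 / (4 * b)) = (√(4 * π) * √b) ^ d := by
  rw [integral_fintype_prod_volume_eq_prod
    (f := fun i (x : ℝ) => Real.exp (-(x - s i) ^ 2 / (4 * b)))]
  simp only [integral_exp_neg_sub_sq_div, Finset.prod_const, Finset.card_univ, Fintype.card_fin]

lemma isFiniteMeasure_volume_restrict_Sd (d : ℕ) :
    IsFiniteMeasure (volume.restrict (Sd d)) :=
  isFiniteMeasure_restrict.2 (volume_Sd_lt_top d).ne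

lemma exists_integral_kappa_le (hs : s ∈ SdInt d) :
    ∃ C : ℝ, 0 < C ∧ ∀ b : ℝ, 0 < b → b ≤ 1 → ∫ x in Sd d, kappa d s b x ≤ C := by
  obtain ⟨C, hC, hκ⟩ := exists_kappa_le_gaussian hs
  refine ⟨C * √(4 * π) ^ d, by positivity, fun b hb hb1 => ?_⟩
  have := isFiniteMeasure_volume_restrict_Sd d
  have hκ_int : IntegrableOn (kappa d s b) (Sd d) :=
    memLp_one_iff_integrable.1 (memLp_kappa hs hb hb1 1 (ae_restrict_mem (measurableSet_Sd d)))
  have hG_int := (integrable_prod_exp_neg_sub_sq_div hb s).const_mul (C * b ^ (-(d : ℝ) / 2))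
  calc ∫ x in Sd d, kappa d s b x
      ≤ ∫ x in Sd d, C * b ^ (-(d : ℝ) / 2) * ∏ i, Real.exp (-(x i - s i) ^ 2 / (4 * b)) :=
        setIntegral_mono_on hκ_int hG_int.integrableOn (measurableSet_Sd d) (hκ b hb hb1)
    _ ≤ ∫ x : Fin d → ℝ, C * b ^ (-(d : ℝ) / 2) * ∏ i, Real.exp (-(x i - s i) ^ 2 / (4 * b)) :=
        setIntegral_le_integral hG_int (.of_forall fun x => by positivity)
    _ = C * b ^ (-(d : ℝ) / 2) * (√(4 * π) * √b) ^ d := by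
        rw [integral_const_mul, integral_prod_exp_neg_sub_sq_div]
    _ = C * √(4 * π) ^ d * (b ^ (-(d : ℝ) / 2) * b ^ ((d : ℝ) / 2)) := by
        rw [mul_pow, Real.sqrt_eq_rpow b, ← Real.rpow_mul_natCast hb.le]
        ring_nf
    _ = C * √(4 * π) ^ d := by
        rw [← Real.rpow_add hb, neg_div, neg_add_cancel, Real.rpow_zero, mul_one]

lemma integral_rpow_le_rpow_mul_integral {α : Type*} [MeasurableSpace α] {μ : Measure α}
    {φ : α → ℝ} {K q : ℝ} (hq : 1 ≤ q) (hφ0 : 0 ≤ᵐ[μ] φ) (hφK : ∀ᵐ x ∂μ, φ x ≤ K)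
    (hφ : Integrable φ μ) : ∫ x, φ x ^ q ∂μ ≤ K ^ (q - 1) * ∫ x, φ x ∂μ := by
  rw [← integral_const_mul]
  refine integral_mono_of_nonneg (hφ0.mono fun x hx => Real.rpow_nonneg hx q)
    (hφ.const_mul _) ?_
  filter_upwards [hφ0, hφK] with x hx0 hxK
  calc φ x ^ q = φ x ^ (q - 1) * φ x := by
        rw [← Real.rpow_add_one' hx0 (by linarith), sub_add_cancel]
    _ ≤ K ^ (q - 1) * φ x := mul_le_mul_of_nonneg_right
        (Real.rpow_le_rpow hx0 hxK (sub_nonneg.2 hq)) hx0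

-- Interpolating between the bounds on `sup κ` and `∫ κ` gives the whole scale of `L^q` norms.
lemma exists_Lq_kappa_le (hs : s ∈ SdInt d) {p q : ℝ} (hpq : p.HolderConjugate q) :
    ∃ C : ℝ, 0 < C ∧ ∀ b : ℝ, 0 < b → b ≤ 1 →
      (∫ x in Sd d, kappa d s b x ^ q) ^ (1 / q) ≤ C * b ^ (-(d : ℝ) / (2 * p)) := by
  obtain ⟨M, hM, hsup⟩ := exists_kappa_le hs
  obtain ⟨I, hI, hint⟩ := exists_integral_kappa_le hs
  have hq := hpq.symm.pos
  have hp := hpq.pos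
  have hexp : (q - 1) * (1 / q) = 1 / p := by
    have := hpq.inv_add_inv_eq_one
    field_simp at this ⊢
    linarith
  refine ⟨M ^ (1 / p) * I ^ (1 / q), by positivity, fun b hb hb1 => ?_⟩
  have := isFiniteMeasure_volume_restrict_Sd d
  have hmem := ae_restrict_mem (μ := volume) (measurableSet_Sd d)
  have hκ0 : 0 ≤ᵐ[volume.restrict (Sd d)] kappa d s b := hmem.mono fun x => kappa_nonneg hs hb
  calc (∫ x in Sd d, kappa d s b x ^ q) ^ (1 / q)
      ≤ ((M * b ^ (-(d : ℝ) / 2)) ^ (q - 1) * ∫ x in Sd d, kappa d s b x) ^ (1 / q) := by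
        refine Real.rpow_le_rpow
          (integral_nonneg_of_ae (hκ0.mono fun x hx => Real.rpow_nonneg hx q)) ?_ (by positivity)
        exact integral_rpow_le_rpow_mul_integral hpq.symm.lt.le hκ0 (hmem.mono (hsup b hb hb1))
          (memLp_one_iff_integrable.1 (memLp_kappa hs hb hb1 1 hmem))
    _ ≤ ((M * b ^ (-(d : ℝ) / 2)) ^ (q - 1) * I) ^ (1 / q) := by
        have := integral_nonneg_of_ae hκ0
        gcongr
        exact hint b hb hb1
    _ = M ^ (1 / p) * I ^ (1 / q) * b ^ (-(d : ℝ) / (2 * p)) := by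
        rw [Real.mul_rpow (by positivity) hI.le, ← Real.rpow_mul (by positivity), hexp,
          Real.mul_rpow hM.le (by positivity), ← Real.rpow_mul hb.le, div_mul_div_comm, mul_one]
        ring

end KernelBounds

section DensityCovariance

variable {Ω : Type*} [MeasurableSpace Ω] {P : Measure Ω}

lemma abs_cov_comp_le_of_density [IsFiniteMeasure P] {α β : Type*} [MeasurableSpace α]
    [MeasurableSpace β] {μ : Measure α} {ν : Measure β} [SFinite μ] [SFinite ν] {p q : ℝ}
    (hpq : p.HolderConjugate q) {Y : Ω → α} {Z : Ω → β} (hY : Measurable Y) (hZ : Measurable Z)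
    {f : α → ℝ} {g : β → ℝ} {h : α × β → ℝ}
    (hYZ : P.map (fun ω => (Y ω, Z ω)) = (μ.prod ν).withDensity fun z => ENNReal.ofReal (h z))
    (hf : P.map Y = μ.withDensity fun x => ENNReal.ofReal (f x))
    (hg : P.map Z = ν.withDensity fun y => ENNReal.ofReal (g y))
    (hdiff : Integrable (fun z => |h z - f z.1 * g z.2| ^ p) (μ.prod ν))
    {φ : α → ℝ} {ψ : β → ℝ} (hφ : 0 ≤ᵐ[μ] φ) (hψ : 0 ≤ᵐ[ν] ψ)
    (hφ_int : Integrable φ (P.map Y)) (hψ_int : Integrable ψ (P.map Z))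
    (hφq : MemLp φ (ENNReal.ofReal q) μ) (hψq : MemLp ψ (ENNReal.ofReal q) ν) :
    |cov P (fun ω => φ (Y ω)) (fun ω => ψ (Z ω))| ≤
      (∫ z, |h z - f z.1 * g z.2| ^ p ∂(μ.prod ν)) ^ (1 / p) *
        ((∫ x, φ x ^ q ∂μ) ^ (1 / q) * (∫ y, ψ y ^ q ∂ν) ^ (1 / q)) := by
  have hYZ_meas := hY.prodMk hZ
  have hfst : (P.map fun ω => (Y ω, Z ω)).map Prod.fst = P.map Y :=
    Measure.map_map measurable_fst hYZ_meas
  have hsnd : (P.map fun ω => (Y ω, Z ω)).map Prod.snd = P.map Z :=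
    Measure.map_map measurable_snd hYZ_meas
  have hcov : cov P (fun ω => φ (Y ω)) (fun ω => ψ (Z ω)) =
      ∫ z, φ z.1 * ψ z.2 ∂(P.map fun ω => (Y ω, Z ω)) -
        (∫ x, φ x ∂(P.map Y)) * ∫ y, ψ y ∂(P.map Z) := by
    rw [integral_map hY.aemeasurable hφ_int.1, integral_map hZ.aemeasurable hψ_int.1,
      integral_map hYZ_meas.aemeasurable, cov]
    rw [← hfst] at hφ_int
    rw [← hsnd] at hψ_int
    exact (hφ_int.1.comp_measurable measurable_fst).mul (hψ_int.1.comp_measurable measurable_snd)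
  rw [hcov, ← hfst, ← hsnd]
  exact abs_integral_joint_sub_mul_le hpq hYZ (hfst.trans hf) (hsnd.trans hg) hdiff hφ hψ
    (by rwa [hfst]) (by rwa [hsnd]) hφq hψq

lemma map_eq_withDensity_restrict {α : Type*} [MeasurableSpace α] {μ : Measure α} {S : Set α}
    (hS : MeasurableSet S) {Y : Ω → α} (hY : Measurable Y) (hYS : ∀ ω, Y ω ∈ S) {g : α → ℝ≥0∞}
    (hg : P.map Y = μ.withDensity g) : P.map Y = (μ.restrict S).withDensity g := by
  rw [← restrict_withDensity hS, ← hg, Measure.restrict_eq_self_of_ae_mem]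
  exact (ae_map_iff hY.aemeasurable hS).2 (.of_forall hYS)

lemma exists_abs_cov_kappa_le_of_AssumpA2 [IsFiniteMeasure P] {d : ℕ}
    {X : ℕ → Ω → (Fin d → ℝ)} (hmeas : ∀ i, Measurable (X i)) (hval : ∀ i ω, X i ω ∈ Sd d)
    {f : (Fin d → ℝ) → ℝ} (hlaw : ∀ i : ℕ, 1 ≤ i →
      P.map (X i) = volume.withDensity fun x => ENNReal.ofReal (f x))
    {p q : ℝ} (hpq : p.HolderConjugate q) (hA2 : AssumpA2 P X f p)
    {s : Fin d → ℝ} (hs : s ∈ SdInt d) :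
    ∃ C : ℝ, 0 < C ∧ ∀ b : ℝ, 0 < b → b ≤ 1 → ∀ i j : ℕ, 1 ≤ i → 1 ≤ j → i ≠ j →
      |cov P (fun ω => kappa d s b (X i ω)) (fun ω => kappa d s b (X j ω))| ≤
        C * b ^ (-(d : ℝ) / p) := by
  obtain ⟨h, hpair, hdiff, D, hD⟩ := hA2
  obtain ⟨C, hC, hκ⟩ := exists_Lq_kappa_le hs hpq
  refine ⟨(|D| + 1) * C ^ 2, by positivity, fun b hb hb1 i j hi hj hij => ?_⟩
  have hSd := measurableSet_Sd d
  have := isFiniteMeasure_volume_restrict_Sd d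
  have hmem := ae_restrict_mem (μ := volume) hSd
  have hκ0 : 0 ≤ᵐ[volume.restrict (Sd d)] kappa d s b := hmem.mono fun x => kappa_nonneg hs hb
  have hprod : (volume : Measure ((Fin d → ℝ) × (Fin d → ℝ))).restrict (Sd d ×ˢ Sd d) =
      (volume.restrict (Sd d)).prod (volume.restrict (Sd d)) := by
    rw [Measure.prod_restrict, Measure.volume_eq_prod]
  have hκ_int : ∀ k, Integrable (kappa d s b) (P.map (X k)) := fun k =>
    memLp_one_iff_integrable.1 (memLp_kappa hs hb hb1 1
      ((ae_map_iff (hmeas k).aemeasurable hSd).2 (.of_forall (hval k))))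
  have hκ_Lq := memLp_kappa hs hb hb1 (ENNReal.ofReal q) hmem
  have hcov := abs_cov_comp_le_of_density hpq (hmeas i) (hmeas j)
    (hprod ▸ map_eq_withDensity_restrict (hSd.prod hSd) ((hmeas i).prodMk (hmeas j))
      (fun ω => ⟨hval i ω, hval j ω⟩) (hpair i j hi hj hij))
    (map_eq_withDensity_restrict hSd (hmeas i) (hval i) (hlaw i hi))
    (map_eq_withDensity_restrict hSd (hmeas j) (hval j) (hlaw j hj))
    (hprod ▸ hdiff i j hi hj hij) hκ0 hκ0 (hκ_int i) (hκ_int j) hκ_Lq hκ_Lq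
  rw [← hprod] at hcov
  have hLq0 : 0 ≤ (∫ x in Sd d, kappa d s b x ^ q) ^ (1 / q) :=
    Real.rpow_nonneg (integral_nonneg_of_ae (hκ0.mono fun x hx => Real.rpow_nonneg hx q)) _
  calc |cov P (fun ω => kappa d s b (X i ω)) (fun ω => kappa d s b (X j ω))|
      ≤ (|D| + 1) * ((C * b ^ (-(d : ℝ) / (2 * p))) * (C * b ^ (-(d : ℝ) / (2 * p)))) := by
        refine hcov.trans (mul_le_mul ?_ ?_ (by positivity) (by positivity))
        · linarith [hD i j hi hj hij, le_abs_self D]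
        · exact mul_le_mul (hκ b hb hb1) (hκ b hb hb1) hLq0 (by positivity)
    _ = (|D| + 1) * C ^ 2 * b ^ (-(d : ℝ) / p) := by
        have hhalf : b ^ (-(d : ℝ) / (2 * p)) * b ^ (-(d : ℝ) / (2 * p)) = b ^ (-(d : ℝ) / p) := by
          rw [← Real.rpow_add hb]
          congr 1
          ring
        rw [← hhalf]
        ring

end DensityCovariance

section MixingCovariance

lemma abs_integral_sub_integral_le_of_measurableSet {Ω : Type*} {m m0 : MeasurableSpace Ω}
    (hm : m ≤ m0) {μ ν : @Measure Ω m0} [IsFiniteMeasure μ] [IsFiniteMeasure ν] {α M : ℝ}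
    (hM : 0 ≤ M) (h : ∀ A, MeasurableSet[m] A → |μ.real A - ν.real A| ≤ α)
    {Y : Ω → ℝ} (hY : Measurable[m] Y) (hY0 : ∀ ω, 0 ≤ Y ω) (hYM : ∀ ω, Y ω ≤ M) :
    |∫ ω, Y ω ∂μ - ∫ ω, Y ω ∂ν| ≤ M * α := by
  have hlayer : ∀ (ρ : Measure Ω) [IsFiniteMeasure ρ],
      ∫ ω, Y ω ∂ρ = ∫ t in Set.Ioc 0 M, ρ.real {ω | t ≤ Y ω} := fun ρ _ =>
    (Integrable.of_mem_Icc 0 M (hY.mono hm le_rfl).aemeasurable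
      (.of_forall fun ω => ⟨hY0 ω, hYM ω⟩)).integral_eq_integral_Ioc_meas_le
        (.of_forall hY0) (.of_forall hYM)
  have hlayer_int : ∀ (ρ : Measure Ω) [IsFiniteMeasure ρ],
      IntegrableOn (fun t : ℝ => ρ.real {ω | t ≤ Y ω}) (Set.Ioc 0 M) := fun ρ _ =>
    (show Antitone fun t : ℝ => ρ.real {ω | t ≤ Y ω} from fun t u htu =>
      measureReal_mono fun ω hω => htu.trans hω).intervalIntegrable.1
  rw [hlayer μ, hlayer ν, ← integral_sub (hlayer_int μ) (hlayer_int ν)]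
  calc |∫ t in Set.Ioc 0 M, (μ.real {ω | t ≤ Y ω} - ν.real {ω | t ≤ Y ω})|
      ≤ α * volume.real (Set.Ioc 0 M) := by
        rw [← Real.norm_eq_abs]
        exact norm_setIntegral_le_of_norm_le_const measure_Ioc_lt_top
          fun t _ => h {ω | t ≤ Y ω} (hY measurableSet_Ici)
    _ = M * α := by rw [Real.volume_real_Ioc_of_le hM, sub_zero, mul_comm]

lemma abs_setIntegral_sub_integral_mul_le {Ω : Type*} {m m0 : MeasurableSpace Ω}
    (hm : m ≤ m0) {P : @Measure Ω m0} [IsFiniteMeasure P] {α M : ℝ} (hM : 0 ≤ M) {B : Set Ω}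
    (hB : ∀ A, MeasurableSet[m] A → |P.real (A ∩ B) - P.real A * P.real B| ≤ α)
    {Y : Ω → ℝ} (hY : Measurable[m] Y) (hY0 : ∀ ω, 0 ≤ Y ω) (hYM : ∀ ω, Y ω ≤ M) :
    |∫ ω in B, Y ω ∂P - (∫ ω, Y ω ∂P) * P.real B| ≤ M * α := by
  have : IsFiniteMeasure (P B • P) := Measure.smul_finite P (measure_ne_top P B)
  have hdiff : ∀ A, MeasurableSet[m] A →
      |(P.restrict B).real A - (P B • P).real A| ≤ α := fun A hA => by
    rw [measureReal_restrict_apply (hm _ hA), measureReal_ennreal_smul_apply, mul_comm]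
    exact hB A hA
  have hint := abs_integral_sub_integral_le_of_measurableSet hm hM hdiff hY hY0 hYM
  rwa [integral_smul_measure, smul_eq_mul, mul_comm] at hint

lemma abs_cov_le_of_measurableSet {Ω : Type*} {m₁ m₂ m0 : MeasurableSpace Ω} (h₁ : m₁ ≤ m0)
    (h₂ : m₂ ≤ m0) {P : @Measure Ω m0} [IsFiniteMeasure P] {α M : ℝ} (hM : 0 ≤ M)
    (h : ∀ A B, MeasurableSet[m₁] A → MeasurableSet[m₂] B →
      |P.real (A ∩ B) - P.real A * P.real B| ≤ α)
    {Y Z : Ω → ℝ} (hY : Measurable[m₁] Y) (hY0 : ∀ ω, 0 ≤ Y ω) (hYM : ∀ ω, Y ω ≤ M)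
    (hZ : Measurable[m₂] Z) (hZ0 : ∀ ω, 0 ≤ Z ω) (hZM : ∀ ω, Z ω ≤ M) :
    |cov P Y Z| ≤ M ^ 2 * α := by
  have hY_meas : Measurable Y := hY.mono h₁ le_rfl
  have hY_int : Integrable Y P :=
    Integrable.of_mem_Icc 0 M hY_meas.aemeasurable (.of_forall fun ω => ⟨hY0 ω, hYM ω⟩)
  have hEY : 0 ≤ ∫ ω, Y ω ∂P := integral_nonneg hY0
  have : IsFiniteMeasure (ENNReal.ofReal (∫ ω, Y ω ∂P) • P) :=
    Measure.smul_finite P ENNReal.ofReal_ne_top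
  have : IsFiniteMeasure (P.withDensity fun ω => ENNReal.ofReal (Y ω)) :=
    isFiniteMeasure_withDensity_ofReal hY_int.2
  have hdiff : ∀ B, MeasurableSet[m₂] B →
      |(P.withDensity fun ω => ENNReal.ofReal (Y ω)).real B -
        (ENNReal.ofReal (∫ ω, Y ω ∂P) • P).real B| ≤ M * α := fun B hB => by
    rw [measureReal_ennreal_smul_apply, ENNReal.toReal_ofReal hEY, measureReal_def,
      withDensity_apply _ (h₂ _ hB), ← ofReal_integral_eq_lintegral_ofReal hY_int.integrableOn
        (.of_forall hY0), ENNReal.toReal_ofReal (integral_nonneg hY0)]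
    exact abs_setIntegral_sub_integral_mul_le h₁ hM (fun A hA => h A B hA hB) hY hY0 hYM
  have hcov := abs_integral_sub_integral_le_of_measurableSet h₂ hM hdiff hZ hZ0 hZM
  rw [integral_smul_measure, ENNReal.toReal_ofReal hEY,
    integral_withDensity_eq_integral_toReal_smul (by fun_prop) (by simp)] at hcov
  simp_rw [ENNReal.toReal_ofReal (hY0 _), smul_eq_mul] at hcov
  rwa [cov, sq, mul_assoc]

lemma abs_measureReal_inter_sub_mul_le_one {Ω : Type*} [MeasurableSpace Ω] (P : Measure Ω)
    [IsZeroOrProbabilityMeasure P] (A B : Set Ω) :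
    |P.real (A ∩ B) - P.real A * P.real B| ≤ 1 :=
  abs_sub_le_of_nonneg_of_le measureReal_nonneg measureReal_le_one
    (mul_nonneg measureReal_nonneg measureReal_nonneg)
    (mul_le_one₀ measureReal_le_one measureReal_nonneg measureReal_le_one)

variable {Ω : Type*} [MeasurableSpace Ω] {P : Measure Ω} [IsProbabilityMeasure P] {d : ℕ}
  {X : ℕ → Ω → (Fin d → ℝ)}

lemma abs_measureReal_inter_sub_mul_le_alphaMix {i j : ℕ} (hi : 1 ≤ i) (hij : i ≤ j)
    {A B : Set Ω} (hA : MeasurableSet[MeasurableSpace.comap (X i) inferInstance] A)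
    (hB : MeasurableSet[MeasurableSpace.comap (X j) inferInstance] B) :
    |P.real (A ∩ B) - P.real A * P.real B| ≤ alphaMix P X (j - i) := by
  have hpast : MeasurableSpace.comap (X i) inferInstance ≤
      ⨆ k ∈ Set.Icc 1 i, MeasurableSpace.comap (X k) inferInstance :=
    le_iSup₂_of_le i ⟨hi, le_rfl⟩ le_rfl
  have hfuture : MeasurableSpace.comap (X j) inferInstance ≤
      ⨆ k ∈ Set.Ici (i + (j - i)), MeasurableSpace.comap (X k) inferInstance :=
    le_iSup₂_of_le j (Nat.add_sub_cancel' hij).le le_rfl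
  refine le_csSup ⟨1, ?_⟩ ⟨i, hi, A, B, hpast _ hA, hfuture _ hB, rfl⟩
  rintro r ⟨-, -, A, B, -, -, rfl⟩
  exact abs_measureReal_inter_sub_mul_le_one P A B

lemma abs_cov_comp_le_alphaMix (hmeas : ∀ i, Measurable (X i)) {φ : (Fin d → ℝ) → ℝ}
    (hφ : Measurable φ) {M : ℝ} (hM : 0 ≤ M) (hφ0 : ∀ i ω, 0 ≤ φ (X i ω))
    (hφM : ∀ i ω, φ (X i ω) ≤ M) {i j : ℕ} (hi : 1 ≤ i) (hij : i ≤ j) :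
    |cov P (fun ω => φ (X i ω)) (fun ω => φ (X j ω))| ≤ M ^ 2 * alphaMix P X (j - i) :=
  abs_cov_le_of_measurableSet (hmeas i).comap_le (hmeas j).comap_le hM
    (fun _ _ => abs_measureReal_inter_sub_mul_le_alphaMix hi hij)
    (hφ.comp (comap_measurable (X i))) (hφ0 i) (hφM i)
    (hφ.comp (comap_measurable (X j))) (hφ0 j) (hφM j)

lemma exists_abs_cov_kappa_le_of_alphaMix (hmeas : ∀ i, Measurable (X i))
    (hval : ∀ i ω, X i ω ∈ Sd d) {ν : ℝ}
    (hA3 : (fun m : ℕ => alphaMix P X m) =O[atTop] fun m : ℕ => (m : ℝ) ^ (-ν))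
    {s : Fin d → ℝ} (hs : s ∈ SdInt d) :
    ∃ C : ℝ, 0 < C ∧ ∀ b : ℝ, 0 < b → b ≤ 1 → ∀ i j : ℕ, 1 ≤ i → i < j →
      |cov P (fun ω => kappa d s b (X i ω)) (fun ω => kappa d s b (X j ω))| ≤
        C * b ^ (-(d : ℝ)) * ((j - i : ℕ) : ℝ) ^ (-ν) := by
  obtain ⟨M, hM, hsup⟩ := exists_kappa_le hs
  obtain ⟨c, hc, hα⟩ := bound_of_isBigO_nat_atTop hA3
  refine ⟨M ^ 2 * c, by positivity, fun b hb hb1 i j hi hij => ?_⟩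
  have hpos : (0 : ℝ) < ((j - i : ℕ) : ℝ) := Nat.cast_pos.2 (Nat.sub_pos_of_lt hij)
  have hdecay : alphaMix P X (j - i) ≤ c * ((j - i : ℕ) : ℝ) ^ (-ν) := by
    have hbound := (le_abs_self _).trans (hα (Real.rpow_pos_of_pos hpos (-ν)).ne')
    rwa [Real.norm_of_nonneg (by positivity)] at hbound
  calc |cov P (fun ω => kappa d s b (X i ω)) (fun ω => kappa d s b (X j ω))|
      ≤ (M * b ^ (-(d : ℝ) / 2)) ^ 2 * alphaMix P X (j - i) :=
        abs_cov_comp_le_alphaMix hmeas (measurable_kappa b) (by positivity)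
          (fun i ω => kappa_nonneg hs hb (hval i ω)) (fun i ω => hsup b hb hb1 _ (hval i ω))
          hi hij.le
    _ ≤ (M * b ^ (-(d : ℝ) / 2)) ^ 2 * (c * ((j - i : ℕ) : ℝ) ^ (-ν)) := by gcongr
    _ = M ^ 2 * c * b ^ (-(d : ℝ)) * ((j - i : ℕ) : ℝ) ^ (-ν) := by
        rw [mul_pow, ← Real.rpow_mul_natCast hb.le, Nat.cast_ofNat, div_mul_cancel₀ _ two_ne_zero]
        ring

end MixingCovariance

section OffDiagonalSums

lemma sum_sub_right_add_sum_sub_left_le {w : ℕ → ℝ} (hw : ∀ m, 0 ≤ w m) {i n : ℕ}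
    (hi : i ∈ Finset.Icc 1 n) :
    ∑ j ∈ Finset.Icc 1 n with i < j, w (j - i) + ∑ j ∈ Finset.Icc 1 n with j < i, w (i - j) ≤
      2 * ∑ m ∈ Finset.Icc 1 n, w m := by
  rw [Finset.mem_Icc] at hi
  have hright : ∑ j ∈ Finset.Icc 1 n with i < j, w (j - i) ≤ ∑ m ∈ Finset.Icc 1 n, w m := by
    rw [← Finset.sum_image (g := fun j => j - i) (f := w) fun j hj k hk hjk => by grind]
    exact Finset.sum_le_sum_of_subset_of_nonneg (fun m hm => by grind) fun m _ _ => hw m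
  have hleft : ∑ j ∈ Finset.Icc 1 n with j < i, w (i - j) ≤ ∑ m ∈ Finset.Icc 1 n, w m := by
    rw [← Finset.sum_image (g := fun j => i - j) (f := w) fun j hj k hk hjk => by grind]
    exact Finset.sum_le_sum_of_subset_of_nonneg (fun m hm => by grind) fun m _ _ => hw m
  linarith

lemma abs_sum_offDiag_le {c : ℕ → ℕ → ℝ} {w : ℕ → ℝ} (hc : ∀ i j, c i j = c j i)
    (hw : ∀ m, 0 ≤ w m) (hcw : ∀ i j, 1 ≤ i → i < j → |c i j| ≤ w (j - i)) (n : ℕ) :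
    |∑ i ∈ Finset.Icc 1 n, ∑ j ∈ Finset.Icc 1 n, if i ≠ j then c i j else 0| ≤
      n * (2 * ∑ m ∈ Finset.Icc 1 n, w m) := by
  have hentry : ∀ i ∈ Finset.Icc 1 n, ∀ j ∈ Finset.Icc 1 n, |if i ≠ j then c i j else 0| ≤
      (if i < j then w (j - i) else 0) + if j < i then w (i - j) else 0 := fun i hi j hj => by
    rw [Finset.mem_Icc] at hi hj
    rcases lt_trichotomy i j with h | rfl | h
    · simpa [h, h.ne, h.not_gt] using hcw i j hi.1 h
    · simp
    · simpa [h, h.ne', h.not_gt, hc i j] using hcw j i hj.1 h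
  have hrow : ∀ i ∈ Finset.Icc 1 n, |∑ j ∈ Finset.Icc 1 n, if i ≠ j then c i j else 0| ≤
      2 * ∑ m ∈ Finset.Icc 1 n, w m := fun i hi => by
    refine ((Finset.abs_sum_le_sum_abs _ _).trans (Finset.sum_le_sum (hentry i hi))).trans ?_
    rw [Finset.sum_add_distrib, ← Finset.sum_filter, ← Finset.sum_filter]
    exact sum_sub_right_add_sum_sub_left_le hw hi
  calc |∑ i ∈ Finset.Icc 1 n, ∑ j ∈ Finset.Icc 1 n, if i ≠ j then c i j else 0|
      ≤ ∑ i ∈ Finset.Icc 1 n, 2 * ∑ m ∈ Finset.Icc 1 n, w m :=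
        (Finset.abs_sum_le_sum_abs _ _).trans (Finset.sum_le_sum hrow)
    _ = n * (2 * ∑ m ∈ Finset.Icc 1 n, w m) := by
        rw [Finset.sum_const, Nat.card_Icc, Nat.add_sub_cancel, nsmul_eq_mul]

lemma sum_Ioc_rpow_neg_le {ν : ℝ} (hν : 1 < ν) {β : ℕ} (hβ : 1 ≤ β) (n : ℕ) :
    ∑ m ∈ Finset.Ioc β n, (m : ℝ) ^ (-ν) ≤ (β : ℝ) ^ (1 - ν) / (ν - 1) := by
  have hβ0 : (0 : ℝ) < β := by exact_mod_cast hβ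
  rcases lt_or_ge n β with h | h
  · rw [Finset.Ioc_eq_empty h.not_gt, Finset.sum_empty]
    exact div_nonneg (by positivity) (by linarith)
  have hanti : AntitoneOn (fun x : ℝ => x ^ (-ν)) (Set.Icc (β : ℝ) n) :=
    fun x hx y _ hxy => Real.rpow_le_rpow_of_nonpos (hβ0.trans_le hx.1) hxy (by linarith)
  have hzero : (0 : ℝ) ∉ Set.uIcc (β : ℝ) n := by
    rw [Set.uIcc_of_le (by exact_mod_cast h)]
    exact fun h0 => h0.1.not_gt hβ0
  calc ∑ m ∈ Finset.Ioc β n, (m : ℝ) ^ (-ν)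
      = ∑ m ∈ Finset.Ico β n, ((m + 1 : ℕ) : ℝ) ^ (-ν) := by
        rw [← Finset.Ico_add_one_add_one_eq_Ioc,
          ← Finset.sum_Ico_add' (fun m : ℕ => (m : ℝ) ^ (-ν)) β n 1]
    _ ≤ ∫ x in (β : ℝ)..n, x ^ (-ν) := hanti.sum_le_integral_Ico h
    _ = ((β : ℝ) ^ (1 - ν) - (n : ℝ) ^ (1 - ν)) / (ν - 1) := by
        rw [integral_rpow (Or.inr ⟨by linarith, hzero⟩), ← neg_div_neg_eq]
        ring_nf
    _ ≤ (β : ℝ) ^ (1 - ν) / (ν - 1) := by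
        have := sub_pos.2 hν
        gcongr
        exact sub_le_self _ (by positivity)

lemma sum_min_rpow_neg_le {ν : ℝ} (hν : 1 < ν) {T₁ T₂ : ℝ} (hT₁ : 0 ≤ T₁) (hT₂ : 0 ≤ T₂) {β : ℕ}
    (hβ : 1 ≤ β) (n : ℕ) :
    ∑ m ∈ Finset.Icc 1 n, min T₁ (T₂ * (m : ℝ) ^ (-ν)) ≤
      β * T₁ + T₂ * ((β : ℝ) ^ (1 - ν) / (ν - 1)) := by
  have hmin : ∀ m : ℕ, 0 ≤ min T₁ (T₂ * (m : ℝ) ^ (-ν)) := fun m => le_min hT₁ (by positivity)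
  calc ∑ m ∈ Finset.Icc 1 n, min T₁ (T₂ * (m : ℝ) ^ (-ν))
      ≤ ∑ m ∈ Finset.Icc 1 β ∪ Finset.Ioc β n, min T₁ (T₂ * (m : ℝ) ^ (-ν)) :=
        Finset.sum_le_sum_of_subset_of_nonneg (fun m hm => by grind) fun m _ _ => hmin m
    _ ≤ ∑ m ∈ Finset.Icc 1 β, min T₁ (T₂ * (m : ℝ) ^ (-ν)) +
          ∑ m ∈ Finset.Ioc β n, min T₁ (T₂ * (m : ℝ) ^ (-ν)) := by
        rw [Finset.sum_union (Finset.disjoint_left.2 fun m hm hm' => by grind)]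
    _ ≤ ∑ _m ∈ Finset.Icc 1 β, T₁ + ∑ m ∈ Finset.Ioc β n, T₂ * (m : ℝ) ^ (-ν) := by
        gcongr
        exacts [min_le_left _ _, min_le_right _ _]
    _ ≤ β * T₁ + T₂ * ((β : ℝ) ^ (1 - ν) / (ν - 1)) := by
        rw [Finset.sum_const, Nat.card_Icc, Nat.add_sub_cancel, nsmul_eq_mul, ← Finset.mul_sum]
        gcongr
        exact sum_Ioc_rpow_neg_le hν hβ n

end OffDiagonalSums

section Asymptotics

lemma one_div_add_one_div_mul_lt_one_half {p q ν : ℝ} (hpq : p.HolderConjugate q) (hp : 2 < p)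
    (hν : 2 * (p - 1) / (p - 2) < ν) : 1 / p + 1 / (ν * q) < 1 / 2 := by
  have hp2 : 0 < p - 2 := sub_pos.2 hp
  have hν0 : 0 < ν := (div_pos (by linarith) hp2).trans hν
  rw [div_lt_iff₀ hp2] at hν
  have hgap : 1 / 2 - (1 / p + 1 / (ν * q)) = (ν * (p - 2) - 2 * (p - 1)) / (2 * p * ν) := by
    have hq : 1 / q = 1 - 1 / p := by linarith [hpq.inv_add_inv_eq_one, one_div p, one_div q]
    rw [← one_div_mul_one_div, hq]
    field_simp
    ring
  have : 0 < 1 / 2 - (1 / p + 1 / (ν * q)) := by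
    rw [hgap]
    exact div_pos (sub_pos.2 hν) (by positivity)
  linarith

lemma one_lt_of_mixing_rate {p ν : ℝ} (hp : 2 < p) (hν : 2 * (p - 1) / (p - 2) < ν) : 1 < ν := by
  refine lt_trans ?_ hν
  rw [one_lt_div (sub_pos.2 hp)]
  linarith

lemma isLittleO_rpow_rpow_of_tendsto_zero {ι : Type*} {l : Filter ι} {b : ι → ℝ}
    (hb : ∀ n, 0 < b n) (hb0 : Tendsto b l (𝓝 0)) {u v : ℝ} (huv : u < v) :
    (fun n => b n ^ v) =o[l] fun n => b n ^ u := by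
  rw [isLittleO_iff_tendsto fun n h => absurd h (Real.rpow_pos_of_pos (hb n) u).ne']
  simp_rw [← Real.rpow_sub (hb _)]
  simpa only [Real.zero_rpow (sub_pos.2 huv).ne'] using
    hb0.rpow_const (Or.inr (sub_pos.2 huv).le)

-- `r` is the optimal cut-off lag: it balances `r b^{-a/p}` against `b^{-a} r^{1-ν}`.
lemma ceil_mul_rpow_add_rpow_mul_ceil_le {p q ν a b A B : ℝ} (hpq : p.HolderConjugate q)
    (hν : 1 < ν) (ha : 0 ≤ a) (hb : 0 < b) (hb1 : b ≤ 1) (hA : 0 ≤ A) (hB : 0 ≤ B) :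
    ⌈b ^ (-a / (ν * q))⌉₊ * (A * b ^ (-a / p)) +
      B * b ^ (-a) * ((⌈b ^ (-a / (ν * q))⌉₊ : ℝ) ^ (1 - ν) / (ν - 1)) ≤
        (2 * A + B / (ν - 1)) * b ^ (-a * (1 / p + 1 / (ν * q))) := by
  have hq := hpq.symm.pos
  set r := b ^ (-a / (ν * q)) with hr
  have hr1 : 1 ≤ r := Real.one_le_rpow_of_pos_of_le_one_of_nonpos hb hb1
    (div_nonpos_of_nonpos_of_nonneg (neg_nonpos.2 ha) (by positivity))
  have hnear : r * b ^ (-a / p) = b ^ (-a * (1 / p + 1 / (ν * q))) := by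
    rw [hr, ← Real.rpow_add hb]
    ring_nf
  have hfar : b ^ (-a) * r ^ (1 - ν) = b ^ (-a * (1 / p + 1 / (ν * q))) := by
    have hp : 1 / p = 1 - 1 / q := by linarith [hpq.inv_add_inv_eq_one, one_div p, one_div q]
    rw [hr, ← Real.rpow_mul hb.le, ← Real.rpow_add hb, hp]
    congr 1
    field_simp
    ring
  have hceil : (⌈r⌉₊ : ℝ) ≤ 2 * r := by linarith [Nat.ceil_lt_add_one (zero_le_one.trans hr1)]
  have hceil_rpow : (⌈r⌉₊ : ℝ) ^ (1 - ν) ≤ r ^ (1 - ν) :=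
    Real.rpow_le_rpow_of_nonpos (one_pos.trans_le hr1) (Nat.le_ceil r) (by linarith)
  have := sub_pos.2 hν
  calc ⌈r⌉₊ * (A * b ^ (-a / p)) + B * b ^ (-a) * ((⌈r⌉₊ : ℝ) ^ (1 - ν) / (ν - 1))
      ≤ 2 * r * (A * b ^ (-a / p)) + B * b ^ (-a) * (r ^ (1 - ν) / (ν - 1)) := by gcongr
    _ = 2 * A * (r * b ^ (-a / p)) + B / (ν - 1) * (b ^ (-a) * r ^ (1 - ν)) := by ring
    _ = (2 * A + B / (ν - 1)) * b ^ (-a * (1 / p + 1 / (ν * q))) := by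
        rw [hnear, hfar]
        ring

variable {Ω : Type*} [MeasurableSpace Ω] {P : Measure Ω}

lemma cov_comm (Y Z : Ω → ℝ) : cov P Y Z = cov P Z Y := by
  simp only [cov, mul_comm]

theorem exists_abs_sum_offDiag_cov_kappa_le [IsProbabilityMeasure P] {d : ℕ}
    {X : ℕ → Ω → (Fin d → ℝ)} (hmeas : ∀ i, Measurable (X i)) (hval : ∀ i ω, X i ω ∈ Sd d)
    {f : (Fin d → ℝ) → ℝ} (hlaw : ∀ i : ℕ, 1 ≤ i →
      P.map (X i) = volume.withDensity fun x => ENNReal.ofReal (f x))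
    {p q : ℝ} (hpq : p.HolderConjugate q) (hA2 : AssumpA2 P X f p) {ν : ℝ} (hν : 1 < ν)
    (hA3 : (fun m : ℕ => alphaMix P X m) =O[atTop] fun m : ℕ => (m : ℝ) ^ (-ν))
    {s : Fin d → ℝ} (hs : s ∈ SdInt d) :
    ∃ C : ℝ, ∀ b : ℝ, 0 < b → b ≤ 1 → ∀ n : ℕ,
      |∑ i ∈ Finset.Icc 1 n, ∑ j ∈ Finset.Icc 1 n,
          if i ≠ j then cov P (fun ω => kappa d s b (X i ω)) (fun ω => kappa d s b (X j ω))
          else 0| ≤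
        C * (n * b ^ (-(d : ℝ) * (1 / p + 1 / (ν * q)))) := by
  obtain ⟨A, hA, hnear⟩ := exists_abs_cov_kappa_le_of_AssumpA2 hmeas hval hlaw hpq hA2 hs
  obtain ⟨B, hB, hfar⟩ := exists_abs_cov_kappa_le_of_alphaMix hmeas hval hA3 hs
  refine ⟨2 * (2 * A + B / (ν - 1)), fun b hb hb1 n => ?_⟩
  have hβ : 1 ≤ ⌈b ^ (-(d : ℝ) / (ν * q))⌉₊ := Nat.one_le_ceil_iff.2 (by positivity)
  refine (abs_sum_offDiag_le
    (w := fun m => min (A * b ^ (-(d : ℝ) / p)) (B * b ^ (-(d : ℝ)) * (m : ℝ) ^ (-ν)))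
    (fun i j => cov_comm _ _) (fun m => by positivity) (fun i j hi hij => le_min
      (hnear b hb hb1 i j hi (hi.trans hij.le) hij.ne) (hfar b hb hb1 i j hi hij)) n).trans ?_
  calc n * (2 * ∑ m ∈ Finset.Icc 1 n,
          min (A * b ^ (-(d : ℝ) / p)) (B * b ^ (-(d : ℝ)) * (m : ℝ) ^ (-ν)))
      ≤ n * (2 * ((2 * A + B / (ν - 1)) * b ^ (-(d : ℝ) * (1 / p + 1 / (ν * q))))) := by
        gcongr
        exact (sum_min_rpow_neg_le hν (by positivity) (by positivity) hβ n).trans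
          (ceil_mul_rpow_add_rpow_mul_ceil_le hpq hν d.cast_nonneg hb hb1 hA.le hB.le)
    _ = 2 * (2 * A + B / (ν - 1)) * (n * b ^ (-(d : ℝ) * (1 / p + 1 / (ν * q)))) := by ring

end Asymptotics

theorem total_off_diagonal_cov_sum_general {Ω : Type*} [MeasurableSpace Ω]
    (P : Measure Ω) [IsProbabilityMeasure P] (d : ℕ) (hd : 1 ≤ d)
    (X : ℕ → Ω → (Fin d → ℝ)) (hmeas : ∀ i, Measurable (X i))
    (hval : ∀ i ω, X i ω ∈ Sd d)
    (f : (Fin d → ℝ) → ℝ)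
    (hlaw : ∀ i : ℕ, 1 ≤ i →
      Measure.map (X i) P = volume.withDensity fun x => ENNReal.ofReal (f x))
    (p q : ℝ) (hp : 2 < p) (hpq : p.HolderConjugate q)
    (hA2 : AssumpA2 P X f p)
    (ν : ℝ) (hν : 2 * (p - 1) / (p - 2) < ν)
    (hA3 : (fun m : ℕ => alphaMix P X m) =O[atTop] fun m : ℕ => (m : ℝ) ^ (-ν))
    (s : Fin d → ℝ) (hs : s ∈ SdInt d)
    (b : ℕ → ℝ) (hbpos : ∀ n, 0 < b n) (hb0 : Tendsto b atTop (𝓝 0)) :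
    (fun n : ℕ => ∑ i ∈ Finset.Icc 1 n, ∑ j ∈ Finset.Icc 1 n,
        if i ≠ j then
          cov P (fun ω => kappa d s (b n) (X i ω)) (fun ω => kappa d s (b n) (X j ω))
        else 0)
      =O[atTop]
      (fun n : ℕ => (n : ℝ) * (b n) ^ (-(d : ℝ) * (1 / p + 1 / (ν * q)))) ∧
    (fun n : ℕ => ∑ i ∈ Finset.Icc 1 n, ∑ j ∈ Finset.Icc 1 n,
        if i ≠ j then
          cov P (fun ω => kappa d s (b n) (X i ω)) (fun ω => kappa d s (b n) (X j ω))
        else 0)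
      =o[atTop] (fun n : ℕ => (n : ℝ) * (b n) ^ (-(d : ℝ) / 2)) := by
  obtain ⟨C, hC⟩ := exists_abs_sum_offDiag_cov_kappa_le hmeas hval hlaw hpq hA2
    (one_lt_of_mixing_rate hp hν) hA3 hs
  have hexp : -(d : ℝ) / 2 < -(d : ℝ) * (1 / p + 1 / (ν * q)) := by
    have hd0 : (0 : ℝ) < d := by exact_mod_cast hd
    linarith [mul_lt_mul_of_pos_left (one_div_add_one_div_mul_lt_one_half hpq hp hν) hd0]
  suffices hbigO : _ =O[atTop] _ from ⟨hbigO, hbigO.trans_isLittleO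
    ((isBigO_refl _ _).mul_isLittleO (isLittleO_rpow_rpow_of_tendsto_zero hbpos hb0 hexp))⟩
  refine IsBigO.of_bound C ?_
  filter_upwards [hb0.eventually_le_const one_pos] with n hn
  rw [Real.norm_of_nonneg (mul_nonneg n.cast_nonneg (Real.rpow_nonneg (hbpos n).le _))]
  exact hC (b n) (hbpos n) hn n

/-- Total off-diagonal covariance sum is `O_s(n b^{-d(1/p+1/(νq))})`
and `o_s(n b^{-d/2})`. -/
theorem total_off_diagonal_cov_sum {Ω : Type*} [MeasurableSpace Ω]
    (P : Measure Ω) [IsProbabilityMeasure P] (d : ℕ) (hd : 1 ≤ d)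
    (X : ℕ → Ω → (Fin d → ℝ)) (hmeas : ∀ i, Measurable (X i))
    (hval : ∀ i ω, X i ω ∈ Sd d)
    (hstat : IsStrictlyStationary P X)
    (f : (Fin d → ℝ) → ℝ)
    (hlaw : ∀ i : ℕ, 1 ≤ i →
      Measure.map (X i) P = volume.withDensity fun x => ENNReal.ofReal (f x))
    (hsupp : ∀ x, x ∉ Sd d → f x = 0)
    (p q : ℝ) (hp : 2 < p) (hq1 : 1 < q) (hq2 : q < 2) (hpq : 1 / p + 1 / q = 1)
    (hA2 : AssumpA2 P X f p)
    (ν : ℝ) (hν : 2 * (p - 1) / (p - 2) < ν)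
    (hA3 : (fun m : ℕ => alphaMix P X m) =O[atTop] fun m : ℕ => (m : ℝ) ^ (-ν))
    (s : Fin d → ℝ) (hs : s ∈ SdInt d)
    (b : ℕ → ℝ) (hbpos : ∀ n, 0 < b n) (hb0 : Tendsto b atTop (𝓝 0)) :
    (fun n : ℕ => ∑ i ∈ Finset.Icc 1 n, ∑ j ∈ Finset.Icc 1 n,
        if i ≠ j then
          cov P (fun ω => kappa d s (b n) (X i ω)) (fun ω => kappa d s (b n) (X j ω))
        else 0)
      =O[atTop]
      (fun n : ℕ => (n : ℝ) * (b n) ^ (-(d : ℝ) * (1 / p + 1 / (ν * q)))) ∧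
    (fun n : ℕ => ∑ i ∈ Finset.Icc 1 n, ∑ j ∈ Finset.Icc 1 n,
        if i ≠ j then
          cov P (fun ω => kappa d s (b n) (X i ω)) (fun ω => kappa d s (b n) (X j ω))
        else 0)
      =o[atTop] (fun n : ℕ => (n : ℝ) * (b n) ^ (-(d : ℝ) / 2)) := by
  exact total_off_diagonal_cov_sum_general P d hd X hmeas hval f hlaw p q hp
    (Real.holderConjugate_iff.2 ⟨by linarith, by simpa using hpq⟩) hA2 ν hν hA3 s hs b hbpos hb0
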